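/- arXiv:1805.02072 — 5 statements merged into one kernel-verified Lean document; each statement's English description precedes it below -/
import Mathlib

section
/- For every natural number n, h(n) ≤ (n³ − n)/24. -/
/-- The recurrence defining the sequence `h` of the iterated threepartite construction:
`h 0 = h 1 = h 2 = 0` and for `n >= 3`, `h n` is the maximum of
`a*b*c + h a + h b + h c` over `a + b + c = n` with `0 <= a, b, c <= n - 1`. -/
def HRec (h : ℕ → ℕ) : Prop :=
  h 0 = 0 ∧ h 1 = 0 ∧ h 2 = 0 ∧
  ∀ n, 3 ≤ n → IsGreatest
    {m | ∃ a b c : ℕ, a + b + c = n ∧ a ≤ n - 1 ∧ b ≤ n - 1 ∧ c ≤ n - 1 ∧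
      m = a * b * c + h a + h b + h c} (h n)

/-- For every natural number `n`, `h n ≤ (n³ - n) / 24`. -/
theorem stmt_0 (h : ℕ → ℕ) (hrec : HRec h) : ∀ n : ℕ, 24 * h n ≤ n ^ 3 - n := by
  obtain ⟨h0, h1, h2, hr⟩ := hrec
  have key : ∀ n : ℕ, 24 * h n + n ≤ n ^ 3 := by
    intro n
    induction n using Nat.strong_induction_on with
    | _ n ih =>
      by_cases hn : 3 ≤ n
      · obtain ⟨a, b, c, habc, ha, hb, hc, hm⟩ := (hr n hn).1
        have iha := ih a (by omega)
        have ihb := ih b (by omega)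
        have ihc := ih c (by omega)
        have e : 24 * (a * b * c) + a ^ 3 + b ^ 3 + c ^ 3 ≤ (a + b + c) ^ 3 := by
          zify
          nlinarith [mul_nonneg (Int.natCast_nonneg a) (sq_nonneg ((b : ℤ) - c)),
            mul_nonneg (Int.natCast_nonneg b) (sq_nonneg ((a : ℤ) - c)),
            mul_nonneg (Int.natCast_nonneg c) (sq_nonneg ((a : ℤ) - b))]
        rw [habc] at e
        omega
      · have : n = 0 ∨ n = 1 ∨ n = 2 := by omega
        rcases this with rfl | rfl | rfl <;> simp [h0, h1, h2]
  intro n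
  have := key n
  omega
end

section
/- For every integer n ≥ 3, h(n) = (n³ − n)/24 holds if and only if n is a power of 3. -/
theorem h_key (h : ℕ → ℕ) (hrec : HRec h) : ∀ n : ℕ,
    24 * (h n : ℤ) + n ≤ (n : ℤ) ^ 3 ∧
      (1 ≤ n → 24 * (h n : ℤ) + n = (n : ℤ) ^ 3 → ∃ k : ℕ, n = 3 ^ k) := by
  obtain ⟨h0, h1, h2, hr⟩ := hrec
  intro n
  induction n using Nat.strong_induction_on with
  | _ n ih =>
    by_cases hn : n < 3
    · interval_cases n
      · simp [h0]
      · simp only [h1]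
        exact ⟨by norm_num, fun _ _ => ⟨0, by norm_num⟩⟩
      · simp [h2]
    · obtain ⟨a, b, c, hs, ha, hb, hc, he⟩ := (hr n (by omega)).1
      have la : a < n := by omega
      have lb : b < n := by omega
      have lc : c < n := by omega
      obtain ⟨ia, ja⟩ := ih a la
      have ib := (ih b lb).1
      have ic := (ih c lc).1
      have e1 : (h n : ℤ) = a * b * c + h a + h b + h c := by exact_mod_cast he
      have e2 : (n : ℤ) = a + b + c := by exact_mod_cast hs.symm
      have t1 : 0 ≤ (a : ℤ) * ((b : ℤ) - c) ^ 2 := by positivity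
      have t2 : 0 ≤ (b : ℤ) * ((c : ℤ) - a) ^ 2 := by positivity
      have t3 : 0 ≤ (c : ℤ) * ((a : ℤ) - b) ^ 2 := by positivity
      have key : (n : ℤ) ^ 3 = a ^ 3 + b ^ 3 + c ^ 3 + 24 * (a * b * c)
          + 3 * (a * ((b : ℤ) - c) ^ 2 + b * ((c : ℤ) - a) ^ 2 + c * ((a : ℤ) - b) ^ 2) := by
        rw [e2]; ring
      refine ⟨by linarith, fun _ heq => ?_⟩
      have z1 : (a : ℤ) * ((b : ℤ) - c) ^ 2 = 0 := by linarith
      have z2 : (b : ℤ) * ((c : ℤ) - a) ^ 2 = 0 := by linarith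
      have z3 : (c : ℤ) * ((a : ℤ) - b) ^ 2 = 0 := by linarith
      have za : 24 * (h a : ℤ) + a = (a : ℤ) ^ 3 := by linarith
      simp only [mul_eq_zero, pow_eq_zero_iff (two_ne_zero)] at z1 z2 z3
      have hab : a = b ∧ a = c := by
        clear ja ih key heq e1 t1 t2 t3 za ia ib ic he
        omega
      obtain ⟨k, hk⟩ := ja (by clear ja ih key heq e1 t1 t2 t3 za ia ib ic he; omega) za
      exact ⟨k + 1, by rw [pow_succ]; omega⟩

theorem h_low (h : ℕ → ℕ) (hrec : HRec h) (k : ℕ) :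
    (3 ^ k) ^ 3 ≤ 24 * h (3 ^ k) + 3 ^ k := by
  induction k with
  | zero => simp
  | succ k ih =>
    have hp : 1 ≤ 3 ^ k := Nat.one_le_pow _ _ (by norm_num)
    have := (hrec.2.2.2 (3 ^ (k + 1)) (by rw [pow_succ]; omega)).2
      ⟨3 ^ k, 3 ^ k, 3 ^ k, by ring, by rw [pow_succ]; omega, by rw [pow_succ]; omega,
        by rw [pow_succ]; omega, rfl⟩
    have e : 3 ^ (k + 1) = 3 * 3 ^ k := by ring
    rw [e] at this ⊢
    generalize 3 ^ k = x at *
    nlinarith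

/-- For every integer `n ≥ 3`, `h n = (n³ - n) / 24` holds iff `n` is a power of `3`. -/
theorem stmt_1 (h : ℕ → ℕ) (hrec : HRec h) :
    ∀ n : ℕ, 3 ≤ n → (24 * h n = n ^ 3 - n ↔ ∃ k : ℕ, n = 3 ^ k) := by
  intro n hn
  obtain ⟨hu, hv⟩ := h_key h hrec n
  have hu' : 24 * h n + n ≤ n ^ 3 := by exact_mod_cast hu
  constructor
  · intro he
    refine hv (le_trans (by norm_num) hn) ?_
    have : 24 * h n + n = n ^ 3 := by omega
    exact_mod_cast this
  · rintro ⟨k, rfl⟩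
    have := h_low h hrec k
    omega
end

section
/- There exists an absolute constant C > 0 such that for all integers n ≥ 2, h(n) > n³/24 − C·n·log n. -/
theorem aux_split (n : ℕ) (hn : 3 ≤ n) : ∃ a b c : ℕ, a + b + c = n ∧ 1 ≤ a ∧ 1 ≤ b ∧ 1 ≤ c ∧
    2 * a ≤ n ∧ 2 * b ≤ n ∧ 2 * c ≤ n ∧
    (n : ℝ) ^ 3 / 24 ≤ a * b * c + (a : ℝ) ^ 3 / 24 + (b : ℝ) ^ 3 / 24 + (c : ℝ) ^ 3 / 24 + n / 4 := by
  obtain ⟨m, hm⟩ : ∃ m, m = n / 3 := ⟨_, rfl⟩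
  have h0 : (0 : ℝ) ≤ m := Nat.cast_nonneg m
  rcases (by omega : n = 3 * m ∨ n = 3 * m + 1 ∨ n = 3 * m + 2) with h | h | h
  · refine ⟨m, m, m, by omega, by omega, by omega, by omega, by omega, by omega, by omega, ?_⟩
    subst h; push_cast; nlinarith
  · refine ⟨m, m, m + 1, by omega, by omega, by omega, by omega, by omega, by omega, by omega, ?_⟩
    subst h; push_cast; nlinarith
  · refine ⟨m, m + 1, m + 1, by omega, by omega, by omega, by omega, by omega, by omega, by omega, ?_⟩
    subst h; push_cast; nlinarith

theorem aux_log (a n : ℕ) (ha : 1 ≤ a) (h : 2 * a ≤ n) :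
    (a : ℝ) * Real.log a ≤ a * (Real.log n - Real.log 2) := by
  have ha' : (0 : ℝ) < a := by exact_mod_cast ha
  have h' : (2 : ℝ) * a ≤ n := by exact_mod_cast h
  have := Real.log_le_log (by positivity) h'
  rw [Real.log_mul (by norm_num) ha'.ne'] at this
  exact mul_le_mul_of_nonneg_left (by linarith) ha'.le

theorem aux_main (h : ℕ → ℕ) (hrec : HRec h) (n : ℕ) (hn : 1 ≤ n) :
    (n : ℝ) ^ 3 / 24 ≤ h n + n * Real.log n + n / 24 := by
  have l2 := Real.log_two_gt_d9
  induction n using Nat.strong_induction_on with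
  | _ n ih =>
    obtain ⟨h0, h1, h2, hr⟩ := hrec
    rcases (by omega : n = 1 ∨ n = 2 ∨ 3 ≤ n) with e | e | e
    · subst e; simp [h1]
    · subst e; simp only [h2]; push_cast; linarith
    · obtain ⟨a, b, c, hs, ha, hb, hc, ha2, hb2, hc2, hd⟩ := aux_split n e
      have hh := (hr n e).2 ⟨a, b, c, hs, by omega, by omega, by omega, rfl⟩
      have hh' : (a : ℝ) * b * c + h a + h b + h c ≤ h n := by exact_mod_cast hh
      have ia := ih a (by omega) ha
      have ib := ih b (by omega) hb
      have ic := ih c (by omega) hc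
      have la := aux_log a n ha ha2
      have lb := aux_log b n hb hb2
      have lc := aux_log c n hc hc2
      have hs' : (n : ℝ) = a + b + c := by exact_mod_cast hs.symm
      have hn0 : (0 : ℝ) ≤ n := Nat.cast_nonneg n
      have key : (a : ℝ) * (Real.log n - Real.log 2) + b * (Real.log n - Real.log 2)
          + c * (Real.log n - Real.log 2) = n * Real.log n - n * Real.log 2 := by
        generalize Real.log n = L
        rw [hs']; ring
      have : (n : ℝ) / 4 ≤ n * Real.log 2 := by nlinarith
      linarith

/-- There is an absolute constant `C > 0` such that `h n > n³/24 - C·n·log n` for all `n ≥ 2`. -/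
theorem stmt_2 (h : ℕ → ℕ) (hrec : HRec h) :
    ∃ C : ℝ, 0 < C ∧ ∀ n : ℕ, 2 ≤ n →
      (n : ℝ) ^ 3 / 24 - C * n * Real.log n < (h n : ℝ) := by
  refine ⟨2, by norm_num, fun n hn => ?_⟩
  have := aux_main h hrec n (by omega)
  have l2 := Real.log_two_gt_d9
  have hn' : (2 : ℝ) ≤ n := by exact_mod_cast hn
  have := Real.log_le_log (by norm_num) hn'
  nlinarith
end

section
/- For every non-degenerate triangle T in the plane, every ε > 0, and every natural number n, h(n, T, ε) ≥ h(n). -/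
open EuclideanGeometry

noncomputable section

abbrev Plane := EuclideanSpace ℝ (Fin 2)

/-- A triple of points is a (non-degenerate) triangle if its points are not collinear. -/
def IsTriangle (p : Fin 3 → Plane) : Prop := ¬ Collinear ℝ (Set.range p)

/-- The angle of the triple `p` at its `i`-th vertex. -/
noncomputable def triAngle (p : Fin 3 → Plane) (i : Fin 3) : ℝ :=
  EuclideanGeometry.angle (p (i + 1)) (p i) (p (i + 2))

/-- `p` is ε-similar to `T`: some correspondence of vertices makes corresponding
angles differ by less than ε. -/
def EpsSimilar (ε : ℝ) (p T : Fin 3 → Plane) : Prop :=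
  ∃ σ : Equiv.Perm (Fin 3), ∀ i, |triAngle p i - triAngle T (σ i)| < ε

/-- The finite set `S` forms a triangle ε-similar to `T`. -/
def FormsSimilar (ε : ℝ) (T : Fin 3 → Plane) (S : Finset Plane) : Prop :=
  ∃ p : Fin 3 → Plane, (S : Set Plane) = Set.range p ∧ IsTriangle p ∧ EpsSimilar ε p T

/-- The number of 3-element subsets of `P` forming a triangle ε-similar to `T`. -/
noncomputable def simCount (ε : ℝ) (T : Fin 3 → Plane) (P : Finset Plane) : ℕ :=
  Set.ncard {S : Finset Plane | S ⊆ P ∧ S.card = 3 ∧ FormsSimilar ε T S}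

/-- `hGeo n T ε` = maximum over `n`-point sets `P` of the number of 3-element
subsets of `P` forming a triangle ε-similar to `T`. -/
noncomputable def hGeo (n : ℕ) (T : Fin 3 → Plane) (ε : ℝ) : ℕ :=
  sSup {m | ∃ P : Finset Plane, P.card = n ∧ simCount ε T P = m}

theorem aux_angle (c : Plane) (d : ℝ) (hd : 0 < d) (p : Fin 3 → Plane) (i : Fin 3) :
    triAngle (fun i => c + d • p i) i = triAngle p i := by
  unfold triAngle EuclideanGeometry.angle
  simp only [vsub_eq_sub, add_sub_add_left_eq_sub, ← smul_sub]
  exact InnerProductGeometry.angle_smul_smul hd.ne' _ _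

theorem aux_tri (c : Plane) (d : ℝ) (hd : 0 < d) (p : Fin 3 → Plane) (hp : IsTriangle p) :
    IsTriangle (fun i => c + d • p i) := by
  unfold IsTriangle at *
  rw [← affineIndependent_iff_not_collinear] at *
  rw [affineIndependent_iff_linearIndependent_vsub ℝ _ (0 : Fin 3)] at *
  simp only [vsub_eq_sub, add_sub_add_left_eq_sub, ← smul_sub] at *
  have := hp.units_smul (fun _ => Units.mk0 d hd.ne')
  exact this

open Classical in
noncomputable def fam (ε : ℝ) (T : Fin 3 → Plane) (P : Finset Plane) : Finset (Finset Plane) :=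
  P.powerset.filter (fun S => S.card = 3 ∧ FormsSimilar ε T S)

theorem mem_fam {ε : ℝ} {T : Fin 3 → Plane} {P S : Finset Plane} :
    S ∈ fam ε T P ↔ S ⊆ P ∧ S.card = 3 ∧ FormsSimilar ε T S := by
  simp [fam]

theorem simCount_eq (ε : ℝ) (T : Fin 3 → Plane) (P : Finset Plane) :
    simCount ε T P = (fam ε T P).card := by
  unfold simCount
  rw [← Set.ncard_coe_finset]
  congr 1
  ext S
  simp [mem_fam]

theorem aux_image (ε : ℝ) (T : Fin 3 → Plane) (P : Finset Plane) (f : Plane → Plane)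
    (hf : Function.Injective f) (c : Plane) (d : ℝ) (hd : 0 < d) (hfe : ∀ x, f x = c + d • x) :
    simCount ε T P ≤ simCount ε T (P.image f) := by
  rw [simCount_eq, simCount_eq]
  apply Finset.card_le_card_of_injOn (fun S => S.image f)
  · intro S hS
    rw [Finset.mem_coe, mem_fam] at hS
    obtain ⟨h1, h2, p, hp, ht, σ, hs⟩ := hS
    rw [Finset.mem_coe, mem_fam]
    refine ⟨Finset.image_subset_image h1, ?_, fun i => c + d • p i, ?_, aux_tri c d hd p ht, σ, ?_⟩
    · rw [Finset.card_image_of_injective _ hf, h2]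
    · rw [Finset.coe_image, hp, ← Set.range_comp]
      congr 1
      ext1 i
      exact hfe _
    · intro i
      rw [aux_angle c d hd]
      exact hs i
  · intro S _ S' _ h
    exact Finset.image_injective hf h

theorem aux_union (ε : ℝ) (T : Fin 3 → Plane) (A B C : Finset Plane)
    (hAB : Disjoint A B) (hAC : Disjoint A C) (hBC : Disjoint B C)
    (H : ∀ x ∈ A, ∀ y ∈ B, ∀ z ∈ C, FormsSimilar ε T {x, y, z}) :
    A.card * B.card * C.card + simCount ε T A + simCount ε T B + simCount ε T C
      ≤ simCount ε T (A ∪ B ∪ C) := by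
  classical
  simp only [simCount_eq]
  have hdis : ∀ X Y : Finset Plane, Disjoint X Y → Disjoint (fam ε T X) (fam ε T Y) := by
    intro X Y hXY
    rw [Finset.disjoint_left]
    intro S h1 h2
    rw [mem_fam] at h1 h2
    have : S ⊆ ∅ := by
      rw [← Finset.bot_eq_empty]
      exact hXY h1.1 h2.1
    rw [Finset.subset_empty] at this
    have := h1.2.1
    simp_all
  set G : Finset (Finset Plane) := (A ×ˢ B ×ˢ C).image (fun t => {t.1, t.2.1, t.2.2}) with hG
  have nAB : ∀ x ∈ A, x ∉ B := fun _ hx => Finset.disjoint_left.1 hAB hx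
  have nAC : ∀ x ∈ A, x ∉ C := fun _ hx => Finset.disjoint_left.1 hAC hx
  have nBC : ∀ x ∈ B, x ∉ C := fun _ hx => Finset.disjoint_left.1 hBC hx
  have hGc : G.card = A.card * B.card * C.card := by
    rw [hG, Finset.card_image_of_injOn, Finset.card_product, Finset.card_product, mul_assoc]
    rintro ⟨x, y, z⟩ h ⟨x', y', z'⟩ h' he
    simp only [Finset.coe_product, Set.mem_prod, Finset.mem_coe] at h h'
    obtain ⟨hx, hy, hz⟩ := h
    obtain ⟨hx', hy', hz'⟩ := h'
    have e : ∀ w, w ∈ ({x, y, z} : Finset Plane) ↔ w ∈ ({x', y', z'} : Finset Plane) := by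
      intro w
      have he' : ({x, y, z} : Finset Plane) = {x', y', z'} := he
      rw [he']
    simp only [Finset.mem_insert, Finset.mem_singleton] at e
    have e1 := e x
    have e2 := e y
    have e3 := e z
    have : x = x' := by grind
    have : y = y' := by grind
    have : z = z' := by grind
    simp_all
  have hGm : ∀ S ∈ G, ∃ x ∈ A, ∃ y ∈ B, ∃ z ∈ C, S = {x, y, z} := by
    intro S hS
    simp only [hG, Finset.mem_image, Finset.mem_product, Prod.exists] at hS
    obtain ⟨x, y, z, ⟨hx, hy, hz⟩, rfl⟩ := hS
    exact ⟨x, hx, y, hy, z, hz, rfl⟩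
  have d1 : Disjoint G (fam ε T A) := by
    rw [Finset.disjoint_left]
    intro S h1 h2
    obtain ⟨x, hx, y, hy, z, hz, rfl⟩ := hGm S h1
    have := (mem_fam.1 h2).1 (show y ∈ _ by simp)
    exact nAB _ this hy
  have d2 : Disjoint G (fam ε T B) := by
    rw [Finset.disjoint_left]
    intro S h1 h2
    obtain ⟨x, hx, y, hy, z, hz, rfl⟩ := hGm S h1
    have := (mem_fam.1 h2).1 (show x ∈ _ by simp)
    exact nAB _ hx this
  have d3 : Disjoint G (fam ε T C) := by
    rw [Finset.disjoint_left]
    intro S h1 h2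
    obtain ⟨x, hx, y, hy, z, hz, rfl⟩ := hGm S h1
    have := (mem_fam.1 h2).1 (show x ∈ _ by simp)
    exact nAC _ hx this
  rw [← hGc, ← Finset.card_union_of_disjoint d1, ← Finset.card_union_of_disjoint,
    ← Finset.card_union_of_disjoint]
  · apply Finset.card_le_card
    intro S hS
    rw [mem_fam]
    simp only [Finset.mem_union] at hS
    rcases hS with ((h | h) | h) | h
    · obtain ⟨x, hx, y, hy, z, hz, rfl⟩ := hGm S h
      refine ⟨?_, ?_, H x hx y hy z hz⟩
      · intro w hw
        simp only [Finset.mem_insert, Finset.mem_singleton] at hw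
        simp only [Finset.mem_union]
        rcases hw with rfl | rfl | rfl
        · exact Or.inl (Or.inl hx)
        · exact Or.inl (Or.inr hy)
        · exact Or.inr hz
      · rw [Finset.card_eq_three]
        exact ⟨x, y, z, fun e => nAB x hx (e ▸ hy), fun e => nAC x hx (e ▸ hz),
          fun e => nBC y hy (e ▸ hz), rfl⟩
    all_goals
      rw [mem_fam] at h
      exact ⟨h.1.trans (by intro w hw; simp [hw]), h.2⟩
  · exact Finset.disjoint_union_left.2 ⟨Finset.disjoint_union_left.2 ⟨d3, hdis _ _ hAC⟩, hdis _ _ hBC⟩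
  · exact Finset.disjoint_union_left.2 ⟨d2, hdis _ _ hAB⟩

theorem aux_near (T : Fin 3 → Plane) (hT : IsTriangle T) (ε : ℝ) (hε : 0 < ε)
    (q : Fin 3 → Plane) :
    ∀ᶠ d : ℝ in nhdsWithin 0 (Set.Ioi 0), IsTriangle (fun i => T i + d • q i) ∧
      ∀ i, |triAngle (fun i => T i + d • q i) i - triAngle T i| < ε := by
  apply Filter.Eventually.filter_mono nhdsWithin_le_nhds
  have h0 : (fun i => T i + (0 : ℝ) • q i) = T := by simp
  have hc : Continuous (fun d : ℝ => (fun i => T i + d • q i : Fin 3 → Plane)) := by fun_prop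
  have hinj : Function.Injective T :=
    (affineIndependent_iff_not_collinear.2 hT).injective
  apply Filter.Eventually.and
  · have ho := (isOpen_setOfPred_affineIndependent (𝕜 := ℝ) (E := Plane) (ι := Fin 3)).preimage hc
    have := ho.mem_nhds (x := (0 : ℝ)) (by
      show AffineIndependent ℝ (fun i => T i + (0 : ℝ) • q i)
      rw [h0]
      exact affineIndependent_iff_not_collinear.2 hT)
    filter_upwards [this] with d hd
    exact affineIndependent_iff_not_collinear.1 hd
  · rw [Filter.eventually_all]
    intro i
    have hA : ContinuousAt (fun d : ℝ => triAngle (fun i => T i + d • q i) i) 0 := by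
      unfold triAngle
      have h1 : T (i + 1) ≠ T i := fun h => by
        have := hinj h
        clear h
        clear * - this
        revert i; decide
      have h2 : T (i + 2) ≠ T i := fun h => by
        have := hinj h
        clear h
        clear * - this
        revert i; decide
      have hk : ContinuousAt (fun d : ℝ => ((T (i + 1) + d • q (i + 1), T i + d • q i,
        T (i + 2) + d • q (i + 2)) : Plane × Plane × Plane)) 0 := by fun_prop
      have hg := EuclideanGeometry.continuousAt_angle (x := (T (i + 1), T i, T (i + 2))) h1 h2
      have := hg.comp_of_eq hk (by simp)
      exact this
    have := Metric.continuousAt_iff'.1 hA ε hε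
    filter_upwards [this] with d hd
    rw [h0, Real.dist_eq] at hd
    exact hd

theorem aux_step (T : Fin 3 → Plane) (hT : IsTriangle T) (ε : ℝ) (hε : 0 < ε)
    (A B C : Finset Plane) : ∃ P : Finset Plane, P.card = A.card + B.card + C.card ∧
      A.card * B.card * C.card + simCount ε T A + simCount ε T B + simCount ε T C
        ≤ simCount ε T P := by
  classical
  set Q : Finset Plane := insert 0 (A ∪ B ∪ C) with hQ
  have hev : ∀ᶠ d : ℝ in nhdsWithin 0 (Set.Ioi 0), ∀ t ∈ Q ×ˢ Q ×ˢ Q,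
      IsTriangle (fun i => T i + d • (![t.1, t.2.1, t.2.2] : Fin 3 → Plane) i) ∧
      ∀ i, |triAngle (fun i => T i + d • (![t.1, t.2.1, t.2.2] : Fin 3 → Plane) i) i
        - triAngle T i| < ε := by
    rw [Filter.eventually_all_finset]
    intro t _
    exact aux_near T hT ε hε _
  obtain ⟨d, hd, hd0⟩ := (hev.and self_mem_nhdsWithin).exists
  have hd0 : 0 < d := hd0
  have key : ∀ x ∈ Q, ∀ y ∈ Q, ∀ z ∈ Q,
      IsTriangle (fun i => T i + d • (![x, y, z] : Fin 3 → Plane) i) ∧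
      ∀ i, |triAngle (fun i => T i + d • (![x, y, z] : Fin 3 → Plane) i) i
        - triAngle T i| < ε := by
    intro x hx y hy z hz
    exact hd (x, y, z) (by simp only [Finset.mem_product]; exact ⟨hx, hy, hz⟩)
  have q0 : (0 : Plane) ∈ Q := by simp [hQ]
  have qA : ∀ x ∈ A, x ∈ Q := fun x hx => by simp [hQ, hx]
  have qB : ∀ x ∈ B, x ∈ Q := fun x hx => by simp [hQ, hx]
  have qC : ∀ x ∈ C, x ∈ Q := fun x hx => by simp [hQ, hx]
  have kinj : ∀ x ∈ Q, ∀ y ∈ Q, ∀ z ∈ Q, Function.Injective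
      (fun i => T i + d • (![x, y, z] : Fin 3 → Plane) i) := fun x hx y hy z hz =>
    (affineIndependent_iff_not_collinear.2 (key x hx y hy z hz).1).injective
  have finj : ∀ c : Plane, Function.Injective (fun x : Plane => c + d • x) := by
    intro c x y hxy
    exact smul_right_injective _ hd0.ne' (add_left_cancel hxy)
  have dAB : Disjoint (A.image (fun x => T 0 + d • x)) (B.image (fun x => T 1 + d • x)) := by
    rw [Finset.disjoint_left]
    intro w h1 h2
    obtain ⟨x, hx, rfl⟩ := Finset.mem_image.1 h1
    obtain ⟨y, hy, he⟩ := Finset.mem_image.1 h2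
    exact absurd (kinj x (qA x hx) y (qB y hy) 0 q0 (a₁ := 1) (a₂ := 0) he) (by decide)
  have dAC : Disjoint (A.image (fun x => T 0 + d • x)) (C.image (fun x => T 2 + d • x)) := by
    rw [Finset.disjoint_left]
    intro w h1 h2
    obtain ⟨x, hx, rfl⟩ := Finset.mem_image.1 h1
    obtain ⟨y, hy, he⟩ := Finset.mem_image.1 h2
    exact absurd (kinj x (qA x hx) 0 q0 y (qC y hy) (a₁ := 2) (a₂ := 0) he) (by decide)
  have dBC : Disjoint (B.image (fun x => T 1 + d • x)) (C.image (fun x => T 2 + d • x)) := by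
    rw [Finset.disjoint_left]
    intro w h1 h2
    obtain ⟨x, hx, rfl⟩ := Finset.mem_image.1 h1
    obtain ⟨y, hy, he⟩ := Finset.mem_image.1 h2
    exact absurd (kinj 0 q0 x (qB x hx) y (qC y hy) (a₁ := 2) (a₂ := 1) he) (by decide)
  refine ⟨A.image (fun x => T 0 + d • x) ∪ B.image (fun x => T 1 + d • x) ∪
    C.image (fun x => T 2 + d • x), ?_, ?_⟩
  · rw [Finset.card_union_of_disjoint (Finset.disjoint_union_left.2 ⟨dAC, dBC⟩),
      Finset.card_union_of_disjoint dAB, Finset.card_image_of_injective _ (finj _),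
      Finset.card_image_of_injective _ (finj _), Finset.card_image_of_injective _ (finj _)]
  · have hu := aux_union ε T _ _ _ dAB dAC dBC (by
      intro x' hx' y' hy' z' hz'
      obtain ⟨x, hx, rfl⟩ := Finset.mem_image.1 hx'
      obtain ⟨y, hy, rfl⟩ := Finset.mem_image.1 hy'
      obtain ⟨z, hz, rfl⟩ := Finset.mem_image.1 hz'
      have hk := key x (qA x hx) y (qB y hy) z (qC z hz)
      refine ⟨_, ?_, hk.1, Equiv.refl _, hk.2⟩
      ext w
      simp [Fin.exists_fin_succ, eq_comm])
    rw [Finset.card_image_of_injective _ (finj _),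
      Finset.card_image_of_injective _ (finj _), Finset.card_image_of_injective _ (finj _)] at hu
    have i1 := aux_image ε T A _ (finj (T 0)) (T 0) d hd0 (fun _ => rfl)
    have i2 := aux_image ε T B _ (finj (T 1)) (T 1) d hd0 (fun _ => rfl)
    have i3 := aux_image ε T C _ (finj (T 2)) (T 2) d hd0 (fun _ => rfl)
    omega

theorem aux_main_s3 (h : ℕ → ℕ) (hrec : HRec h)
    (T : Fin 3 → Plane) (hT : IsTriangle T) (ε : ℝ) (hε : 0 < ε) (n : ℕ) :
    ∃ P : Finset Plane, P.card = n ∧ h n ≤ simCount ε T P := by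
  induction n using Nat.strong_induction_on with
  | _ n ih =>
    obtain ⟨h0, h1, h2, h3⟩ := hrec
    by_cases hn : 3 ≤ n
    · obtain ⟨a, b, c, hs, ha, hb, hc, he⟩ := (h3 n hn).1
      obtain ⟨A, hA, hA'⟩ := ih a (by omega)
      obtain ⟨B, hB, hB'⟩ := ih b (by omega)
      obtain ⟨C, hC, hC'⟩ := ih c (by omega)
      obtain ⟨P, hP, hP'⟩ := aux_step T hT ε hε A B C
      rw [hA, hB, hC] at hP hP'
      exact ⟨P, by omega, by omega⟩
    · obtain ⟨P, hP⟩ := Infinite.exists_subset_card_eq Plane n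
      refine ⟨P, hP, ?_⟩
      have : h n = 0 := by
        interval_cases n <;> assumption
      omega

/-- For every non-degenerate triangle `T`, every `ε > 0` and every `n`,
`h(n, T, ε) ≥ h(n)`. -/
theorem stmt_3 (h : ℕ → ℕ) (hrec : HRec h)
    (T : Fin 3 → Plane) (hT : IsTriangle T) (ε : ℝ) (hε : 0 < ε) :
    ∀ n : ℕ, h n ≤ hGeo n T ε := by
  intro n
  obtain ⟨P, hP, hle⟩ := aux_main_s3 h hrec T hT ε hε n
  refine hle.trans (le_csSup ⟨2 ^ n, ?_⟩ ⟨P, hP, rfl⟩)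
  rintro m ⟨R, hR, rfl⟩
  rw [simCount_eq, ← hR, ← Finset.card_powerset]
  exact Finset.card_le_card (fun S hS => Finset.mem_powerset.2 (mem_fam.1 hS).1)

end
end

section
/- Let T be an equilateral triangle in the plane. There exists ε₀ ≥ π/180 such that for every ε with 0 < ε < ε₀ and every natural number n, h(n, T, ε) = h(n). In particular, when n is a power of 3, h(n, T, ε) = (n³ − n)/24. -/
open EuclideanGeometry

noncomputable section

theorem cos_bounds {θ : ℝ} (h : |θ - Real.pi/3| < Real.pi/180) :
    0.4848 ≤ Real.cos θ ∧ Real.cos θ ≤ 0.51512 := by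
  obtain ⟨x, rfl⟩ : ∃ x, θ = Real.pi/3 + x := ⟨θ - Real.pi/3, by ring⟩
  have hx : |x| < 0.017454 := by
    have := Real.pi_lt_d4
    have h2 : |x| < Real.pi/180 := by simpa using h
    linarith
  have hx2 := abs_lt.1 hx
  rw [Real.cos_add, Real.cos_pi_div_three, Real.sin_pi_div_three]
  have hs : |Real.sin x| ≤ |x| := Real.abs_sin_le_abs
  have h3 : Real.sqrt 3 ≤ 1.73206 := by
    rw [Real.sqrt_le_left (by norm_num)]; norm_num
  have h30 : 0 ≤ Real.sqrt 3 := Real.sqrt_nonneg _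
  have hc1 := Real.cos_le_one x
  have hc2 := Real.one_sub_sq_div_two_le_cos (x := x)
  have hm : |Real.sqrt 3 / 2 * Real.sin x| ≤ 0.866031 * 0.017454 := by
    rw [abs_mul, abs_of_nonneg (by positivity)]
    exact mul_le_mul (by linarith) (by linarith) (abs_nonneg _) (by norm_num)
  have hm2 := abs_le.1 hm
  have hxx : x^2 ≤ 0.017454^2 := by
    rw [← sq_abs]; gcongr
  constructor <;> norm_num at * <;> linarith

theorem cot_bounds {A B x : ℝ} (hx : x^2 = A^2 + B^2) (hx0 : 0 < x)
    (h1 : 0.4848 * x ≤ A) (h2 : A ≤ 0.51512 * x) :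
    0.5542 * |B| ≤ A ∧ A ≤ 0.6011 * |B| := by
  have hA : 0 < A := by nlinarith
  constructor
  · refine (pow_le_pow_iff_left₀ (by positivity) hA.le two_ne_zero).1 ?_
    rw [mul_pow, sq_abs]
    nlinarith
  · refine (pow_le_pow_iff_left₀ hA.le (by positivity) two_ne_zero).1 ?_
    rw [mul_pow, sq_abs]
    nlinarith

theorem poly_bound {u V : ℝ} (hV : 0 ≤ V) (a1 : 0.5542 * V ≤ u) (a2 : u ≤ 0.6011 * V)
    (b1 : 0.5542 * V ≤ 1 - u) (b2 : 1 - u ≤ 0.6011 * V)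
    (c1 : 0.5542 * V ≤ u^2 + V^2 - u) (c2 : u^2 + V^2 - u ≤ 0.6011 * V) :
    (u - 1/2)^2 + (V - Real.sqrt 3/2)^2 ≤ 0.0208^2 ∧ u^2 + V^2 ≤ 1.021^2 := by
  have h31 : Real.sqrt 3 ≤ 1.73206 := by
    rw [Real.sqrt_le_left (by norm_num)]; norm_num
  have h32 : 1.73205 ≤ Real.sqrt 3 := by
    apply Real.le_sqrt_of_sq_le; norm_num
  have h33 : Real.sqrt 3 ^2 = 3 := Real.sq_sqrt (by norm_num)
  generalize Real.sqrt 3 = r at *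
  have hV1 : 0.83 ≤ V := by linarith
  have hV2 : V ≤ 0.91 := by linarith
  have hu1 : 0.45 ≤ u := by linarith
  have hu2 : u ≤ 0.55 := by linarith
  constructor
  · have hw1 : V ≤ 0.88394 := by
      by_contra hh
      push Not at hh
      nlinarith [sq_nonneg (u - 1/2)]
    have he : (u-1/2)^2 ≤ 0.0209^2 := by
      rw [← sq_abs]
      have : |u - 1/2| ≤ 0.0209 := by rw [abs_le]; constructor <;> linarith
      gcongr
    have hw2 : 0.84835 ≤ V := by
      by_contra hh
      push Not at hh
      nlinarith
    clear c1 c2 he hV1 hV2 hu1 hu2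
    obtain ⟨e, rfl⟩ : ∃ e, u = 1/2 + e := ⟨u - 1/2, by ring⟩
    obtain ⟨d, rfl⟩ : ∃ d, V = r/2 + d := ⟨V - r/2, by ring⟩
    have hd1 : d ≤ 0.01792 := by linarith
    have hd2 : -0.0177 ≤ d := by linarith
    have hg : (1/2 + e - 1/2)^2 + (r/2 + d - r/2)^2 = e^2 + d^2 := by ring
    rw [hg]
    rcases le_total 0 d with hd | hd
    · have h1 : |e| ≤ 0.02008 - 0.5542 * d := by
        rw [abs_le]; constructor <;> linarith
      have h2 : e^2 ≤ (0.02008 - 0.5542 * d)^2 := by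
        rw [← sq_abs]; gcongr
      nlinarith [mul_nonneg hd (sub_nonneg.2 hd1)]
    · have h1 : |e| ≤ 0.0206 + 0.6011 * d := by
        rw [abs_le]; constructor <;> linarith
      have h2 : e^2 ≤ (0.0206 + 0.6011 * d)^2 := by
        rw [← sq_abs]; gcongr
      nlinarith [mul_nonneg (neg_nonneg.2 hd) (sub_nonneg.2 hd2)]
  · nlinarith

def om : ℂ := ⟨1/2, Real.sqrt 3/2⟩

def NE (ε : ℝ) (p q r : ℂ) : Prop :=
  |∠ q p r - Real.pi/3| < ε ∧ |∠ p q r - Real.pi/3| < ε ∧ |∠ p r q - Real.pi/3| < ε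

theorem NE.swap12 {ε : ℝ} {p q r : ℂ} (h : NE ε p q r) : NE ε q p r := by
  obtain ⟨h1, h2, h3⟩ := h
  exact ⟨h2, h1, by rwa [angle_comm]⟩

theorem NE.swap23 {ε : ℝ} {p q r : ℂ} (h : NE ε p q r) : NE ε p r q := by
  obtain ⟨h1, h2, h3⟩ := h
  exact ⟨by rwa [angle_comm], h3, h2⟩

theorem NE.ne {ε : ℝ} (hε : ε < Real.pi/180) {p q r : ℂ} (h : NE ε p q r) : p ≠ q := by
  rintro rfl
  have := h.1
  simp only [angle_self_left] at this
  have := abs_lt.1 this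
  have := Real.pi_pos
  linarith [this]

theorem cos_angle_sub {x y : ℂ} (hx : x ≠ 0) (hy : y ≠ 0) :
    Real.cos (InnerProductGeometry.angle x y) = (y / x).re / ‖y / x‖ := by
  rw [InnerProductGeometry.angle_comm, Complex.angle_eq_abs_arg hy hx, Real.cos_abs,
    Complex.cos_arg (div_ne_zero hy hx)]

theorem NE.geom {ε : ℝ} (hε : ε < Real.pi/180) {p q r : ℂ} (h : NE ε p q r) :
    (‖r - p - om * (q - p)‖ ≤ 0.0208 * ‖q - p‖ ∨
     ‖r - p - (starRingEnd ℂ om) * (q - p)‖ ≤ 0.0208 * ‖q - p‖) ∧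
    ‖r - p‖ ≤ 1.021 * ‖q - p‖ := by
  have hpq : p ≠ q := h.ne hε
  have hpr : p ≠ r := h.swap23.ne hε
  have hqr : q ≠ r := h.swap12.swap23.ne hε
  have hz : q - p ≠ 0 := sub_ne_zero.2 hpq.symm
  have hy : r - p ≠ 0 := sub_ne_zero.2 hpr.symm
  obtain ⟨h1, h2, h3⟩ := h
  obtain ⟨w, hw⟩ : ∃ w, r - p = w * (q - p) := ⟨(r-p)/(q-p), by field_simp⟩
  have hw0 : w ≠ 0 := by rintro rfl; simp at hw; exact hy hw
  have hw1 : 1 - w ≠ 0 := by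
    intro hh
    have : w = 1 := by linear_combination -hh
    subst this
    apply hqr
    linear_combination -hw
  have c1 := cos_bounds (h1.trans hε)
  have c2 := cos_bounds (h2.trans hε)
  have c3 := cos_bounds (h3.trans hε)
  unfold EuclideanGeometry.angle at c1 c2 c3
  simp only [vsub_eq_sub] at c1 c2 c3
  have e1 : (r - p) / (q - p) = w := by rw [hw]; field_simp
  have e2 : (r - q) / (p - q) = 1 - w := by
    have : p - q ≠ 0 := sub_ne_zero.2 hpq
    rw [div_eq_iff this]; linear_combination hw
  have e3 : (q - r) / (p - r) = 1 - w⁻¹ := by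
    have : p - r ≠ 0 := sub_ne_zero.2 hpr
    rw [div_eq_iff this]; field_simp; linear_combination -hw
  rw [cos_angle_sub hz hy, e1] at c1
  rw [cos_angle_sub (sub_ne_zero.2 hpq) (sub_ne_zero.2 hqr.symm), e2] at c2
  rw [cos_angle_sub (sub_ne_zero.2 hpr) (sub_ne_zero.2 hqr), e3] at c3
  have n1 : 0 < ‖w‖ := norm_pos_iff.2 hw0
  have n2 : 0 < ‖1 - w‖ := norm_pos_iff.2 hw1
  have e4 : 1 - w⁻¹ = (w - 1) * (starRingEnd ℂ w) / ((‖w‖^2 : ℝ) : ℂ) := by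
    have : ((‖w‖^2 : ℝ) : ℂ) = w * starRingEnd ℂ w := by
      rw [Complex.mul_conj, Complex.normSq_eq_norm_sq]
    rw [this]
    have hc : starRingEnd ℂ w ≠ 0 := by simpa using hw0
    field_simp
  have e5 : (1 - w⁻¹).re / ‖1 - w⁻¹‖ = (w.re^2 + w.im^2 - w.re) / (‖w‖ * ‖1 - w‖) := by
    have hn : ‖1 - w⁻¹‖ = ‖1 - w‖ / ‖w‖ := by
      rw [← norm_div, ← norm_neg]; congr 1; field_simp; ring
    have hr : (1 - w⁻¹).re = (w.re^2 + w.im^2 - w.re) / ‖w‖^2 := by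
      rw [e4, Complex.div_ofReal_re]; congr 1; simp; ring
    rw [hn, hr]; field_simp
  rw [e5] at c3
  rw [le_div_iff₀ n1, div_le_iff₀ n1] at c1
  rw [le_div_iff₀ n2, div_le_iff₀ n2] at c2
  rw [le_div_iff₀ (by positivity), div_le_iff₀ (by positivity)] at c3
  have s1 : ‖w‖^2 = w.re^2 + w.im^2 := by
    rw [← Complex.normSq_eq_norm_sq, Complex.normSq_apply]; ring
  have s2 : ‖1 - w‖^2 = (1 - w.re)^2 + w.im^2 := by
    rw [← Complex.normSq_eq_norm_sq, Complex.normSq_apply]; simp; ring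
  have d1 := cot_bounds s1 n1 c1.1 c1.2
  have d2 := cot_bounds s2 n2 (by simpa using c2.1) (by simpa using c2.2)
  have d3 := cot_bounds (B := w.im) (by rw [mul_pow, s1, s2]; ring) (by positivity) c3.1 c3.2
  rw [← sq_abs w.im] at d3
  obtain ⟨g1, g2⟩ := poly_bound (abs_nonneg _) d1.1 d1.2 d2.1 d2.2 d3.1 d3.2
  have k1 : ∀ o : ℂ, ‖r - p - o * (q - p)‖ = ‖w - o‖ * ‖q - p‖ := by
    intro o; rw [hw, ← norm_mul]; congr 1; ring
  have k2 : ∀ o : ℂ, ‖w - o‖^2 = (w.re - o.re)^2 + (w.im - o.im)^2 := by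
    intro o; rw [← Complex.normSq_eq_norm_sq, Complex.normSq_apply]; simp; ring
  refine ⟨?_, ?_⟩
  · rcases le_total 0 w.im with hi | hi
    · left
      rw [abs_of_nonneg hi] at g1
      rw [k1]
      gcongr
      refine (pow_le_pow_iff_left₀ (by positivity) (by norm_num) two_ne_zero).1 ?_
      rw [k2]; exact g1
    · right
      rw [abs_of_nonpos hi] at g1
      rw [k1]
      gcongr
      refine (pow_le_pow_iff_left₀ (by positivity) (by norm_num) two_ne_zero).1 ?_
      rw [k2]; simp only [Complex.conj_re, Complex.conj_im, om]; linarith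
  · rw [hw, norm_mul]
    gcongr
    refine (pow_le_pow_iff_left₀ (by positivity) (by norm_num) two_ne_zero).1 ?_
    rw [s1, ← sq_abs w.im]; exact g2

theorem normsq (z : ℂ) : ‖z‖^2 = z.re^2 + z.im^2 := by
  rw [← Complex.normSq_eq_norm_sq, Complex.normSq_apply]; ring

theorem re_mul_conj_le (u e : ℂ) : |u.re * e.re + u.im * e.im| ≤ ‖u‖ * ‖e‖ := by
  refine abs_le_of_sq_le_sq ?_ (by positivity)
  rw [mul_pow, normsq, normsq]
  nlinarith [sq_nonneg (u.re * e.im - u.im * e.re)]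

theorem final_poly {X S : ℝ} (h1 : -0.0135 ≤ S)
    (h2 : S + (4*X^2 - 2*S*X + S^2)/3 ≤ 0.0863)
    (h3 : 2*X + (4*X^2 - 2*S*X + S^2)/3 ≤ 0.0425) :
    (4*X^2 - 2*S*X + S^2)/3 + 3 * 0.083^2 + 0.083 * (4*X - S) ≤ 0.179^2 := by
  have hU : (4*X^2 - 2*S*X + S^2)/3 = X^2 + (S-X)^2/3 := by ring
  have hS2 : S ≤ 0.0863 := by nlinarith [sq_nonneg X, sq_nonneg (S-X)]
  have hX1 : X ≤ 0.02125 := by nlinarith [sq_nonneg X, sq_nonneg (S-X)]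
  have hX2 : -0.28 ≤ X := by
    by_contra hh
    push Not at hh
    nlinarith [sq_nonneg X, sq_nonneg (S-X)]
  nlinarith [mul_nonneg (sub_nonneg.2 hX1) (sub_nonneg.2 hX2), mul_nonneg (sub_nonneg.2 h1) (sub_nonneg.2 hX2), mul_nonneg (sub_nonneg.2 hX1) (sub_nonneg.2 h1), mul_nonneg (sub_nonneg.2 h1) (sub_nonneg.2 hS2), sq_nonneg (S-X)]

set_option maxHeartbeats 1000000 in
theorem core_frame {p b q : ℂ} {D : ℝ} (hD : D ≤ 1.021) (hb : ‖b - om‖ ≤ 0.0208)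
    (hp : ‖p‖ ≤ D)
    (hq : ‖q - om * p‖ ≤ 0.0208 * ‖p‖ ∨ ‖q - (starRingEnd ℂ om) * p‖ ≤ 0.0208 * ‖p‖)
    (hqa : ‖q - 1‖ ≤ D) (hqb : ‖q - b‖ ≤ D)
    (n1 : ‖p - 1‖ ≤ ‖p‖) (n2 : ‖p - 1‖ ≤ ‖p - b‖)
    (ang : 0 ≤ (p - 1).re * b.re + (p - 1).im * b.im) :
    ‖p - (1 + 0.083 * (b - 2))‖ ≤ 0.181 := by
  have h31 : Real.sqrt 3 ≤ 1.73206 := by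
    rw [Real.sqrt_le_left (by norm_num)]; norm_num
  have h32 : 1.73205 ≤ Real.sqrt 3 := by
    apply Real.le_sqrt_of_sq_le; norm_num
  have h33 : Real.sqrt 3 ^2 = 3 := Real.sq_sqrt (by norm_num)
  have hp1 : ‖p‖ ≤ 1.021 := hp.trans hD
  have hps : p.re^2 + p.im^2 ≤ 1.021^2 := by
    rw [← normsq]; gcongr
  have hoo : om * (starRingEnd ℂ om) = 1 := by
    apply Complex.ext <;> simp [om] <;> nlinarith
  have hno : ‖om‖ = 1 := by
    have : ‖om‖^2 = 1 := by
      rw [normsq]; simp only [om]; nlinarith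
    nlinarith [norm_nonneg om]
  have hno' : ‖(starRingEnd ℂ om)‖ = 1 := by
    rw [RCLike.norm_conj]; exact hno
  rcases hq with hq | hq
  · -- good case
    have hk : ‖p - (starRingEnd ℂ om)‖ ≤ 1.021 * 1.0208 := by
      have : ‖p - (starRingEnd ℂ om)‖ = ‖om * p - 1‖ := by
        rw [← hoo, ← mul_sub, norm_mul, hno, one_mul]
      rw [this]
      have := norm_sub_le (q - 1) (q - om * p)
      have e : q - 1 - (q - om * p) = om * p - 1 := by ring
      rw [e] at this
      linarith
    have hk2 : (p.re - 1/2)^2 + (p.im + Real.sqrt 3/2)^2 ≤ (1.021 * 1.0208)^2 := by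
      have h := normsq (p - (starRingEnd ℂ om))
      simp only [Complex.sub_re, Complex.sub_im, Complex.conj_re, Complex.conj_im, om] at h
      have : ‖p - (starRingEnd ℂ om)‖^2 ≤ (1.021 * 1.0208)^2 := by gcongr
      simp only [om] at this
      linarith
    obtain ⟨u, rfl⟩ : ∃ u, p = 1 + u := ⟨p - 1, by ring⟩
    have hang : -(‖u‖ * 0.0208) ≤ u.re * (1/2) + u.im * (Real.sqrt 3/2) := by
      have h1 := re_mul_conj_le u (b - om)
      have h2 : ‖u‖ * ‖b - om‖ ≤ ‖u‖ * 0.0208 := by gcongr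
      have h3 := (abs_le.1 h1).2
      simp only [Complex.sub_re, Complex.sub_im, om, add_sub_cancel_left] at h3 ang
      simp only [om] at h2
      nlinarith
    simp only [Complex.add_re, Complex.add_im, Complex.one_re, Complex.one_im] at hk2 hps
    have hU := normsq u
    obtain ⟨S, hS⟩ : ∃ S, S = u.re + Real.sqrt 3 * u.im := ⟨_, rfl⟩
    have hUS : u.re^2 + u.im^2 = (4*u.re^2 - 2*S*u.re + S^2)/3 := by
      rw [hS]; ring_nf; rw [h33]; ring
    have g2 : S + (u.re^2 + u.im^2) ≤ 0.0863 := by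
      rw [hS]; norm_num at hk2 ⊢; nlinarith
    have hu : ‖u‖ ≤ 0.32 := by
      have hh1 : ‖u‖^2 ≤ 0.0863 + 0.0416 * ‖u‖ := by linarith
      clear * - hh1
      by_contra hh
      push Not at hh
      nlinarith
    have g1 : -0.0135 ≤ S := by linarith
    have g3 : 2 * u.re + (u.re^2 + u.im^2) ≤ 0.0425 := by
      norm_num at hps ⊢; nlinarith
    rw [hUS] at g2 g3
    have F := final_poly g1 g2 g3
    have hm : ‖u - 0.083 * (om - 2)‖ ≤ 0.179 := by
      refine (pow_le_pow_iff_left₀ (by positivity) (by norm_num) two_ne_zero).1 ?_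
      refine le_trans (le_of_eq ?_) F
      rw [← hUS, normsq, hS]
      have e1 : (u - 0.083 * (om - 2)).re = u.re + 0.083 * (3/2) := by
        simp [om]; norm_num
      have e2 : (u - 0.083 * (om - 2)).im = u.im - 0.083 * (Real.sqrt 3/2) := by
        simp [om]
      rw [e1, e2]
      ring_nf; rw [h33]; ring
    have e : 1 + u - (1 + 0.083 * (b - 2)) = (u - 0.083 * (om - 2)) - 0.083 * (b - om) := by ring
    rw [e]
    have := norm_sub_le (u - 0.083 * (om - 2)) (0.083 * (b - om))
    rw [norm_mul] at this
    have h83 : ‖(0.083 : ℂ)‖ = 0.083 := by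
      rw [show (0.083 : ℂ) = ((0.083 : ℝ) : ℂ) by norm_num, Complex.norm_real]; norm_num
    rw [h83] at this
    linarith
  · exfalso
    have hk : ‖p - om^2‖ ≤ 1.021 + 0.0208 * 1.021 + 0.0208 := by
      have : ‖p - om^2‖ = ‖(starRingEnd ℂ om) * p - om‖ := by
        have e : (starRingEnd ℂ om) * p - om = (starRingEnd ℂ om) * (p - om^2) := by
          linear_combination om * hoo
        rw [e, norm_mul, hno', one_mul]
      rw [this]
      have h1 := norm_sub_le (q - b) (q - (starRingEnd ℂ om) * p)
      have h2 := norm_add_le (q - b - (q - (starRingEnd ℂ om) * p)) (b - om)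
      have e : q - b - (q - (starRingEnd ℂ om) * p) + (b - om) = (starRingEnd ℂ om) * p - om := by ring
      rw [e] at h2
      linarith
    have hk2 : (p.re + 1/2)^2 + (p.im - Real.sqrt 3/2)^2 ≤ 1.0631^2 := by
      have h := normsq (p - om^2)
      have : ‖p - om^2‖^2 ≤ 1.0631^2 := by gcongr; linarith
      rw [h] at this
      have e1 : (om^2).re = -1/2 := by simp [om, pow_two]; nlinarith
      have e2 : (om^2).im = Real.sqrt 3/2 := by simp [om, pow_two]; nlinarith
      simp only [Complex.sub_re, Complex.sub_im, e1, e2] at this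
      nlinarith
    have m1 : 1/2 ≤ p.re := by
      have h : ‖p - 1‖^2 ≤ ‖p‖^2 := by gcongr
      rw [normsq, normsq] at h
      simp at h
      nlinarith
    have m2 : ‖p - 1‖ ≤ ‖p - om‖ + 0.0208 := by
      have := norm_sub_le (p - om) (b - om)
      rw [show p - om - (b - om) = p - b by ring] at this
      linarith
    have m3 : ‖p - om‖ ≤ 1.1 := by
      have h : ‖p - om‖^2 ≤ 1.1^2 := by
        rw [normsq]; simp only [Complex.sub_re, Complex.sub_im, om]
        nlinarith
      exact (pow_le_pow_iff_left₀ (by positivity) (by norm_num) two_ne_zero).1 h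
    have m4 : ‖p - 1‖^2 ≤ ‖p - om‖^2 + 0.05 := by
      have : ‖p - 1‖^2 ≤ (‖p - om‖ + 0.0208)^2 := by gcongr
      nlinarith
    rw [normsq, normsq] at m4
    simp only [Complex.sub_re, Complex.sub_im, om, Complex.one_re, Complex.one_im] at m4
    have m5 : Real.sqrt 3 * p.im ≤ p.re + 0.05 := by nlinarith
    have hy : 0.5 ≤ p.im := by
      by_contra hh
      push Not at hh
      nlinarith
    have hx : 0.8 ≤ p.re := by nlinarith
    nlinarith [sq_nonneg (p.im - Real.sqrt 3/2)]

theorem core_frame' {p b q : ℂ} {D : ℝ} (hD : D ≤ 1.021)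
    (hb : ‖b - om‖ ≤ 0.0208 ∨ ‖b - starRingEnd ℂ om‖ ≤ 0.0208)
    (hp : ‖p‖ ≤ D)
    (hq : ‖q - om * p‖ ≤ 0.0208 * ‖p‖ ∨ ‖q - (starRingEnd ℂ om) * p‖ ≤ 0.0208 * ‖p‖)
    (hqa : ‖q - 1‖ ≤ D) (hqb : ‖q - b‖ ≤ D)
    (n1 : ‖p - 1‖ ≤ ‖p‖) (n2 : ‖p - 1‖ ≤ ‖p - b‖)
    (ang : 0 ≤ (p - 1).re * b.re + (p - 1).im * b.im) :
    ‖p - (1 + 0.083 * (b - 2))‖ ≤ 0.181 := by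
  rcases hb with hb | hb
  · exact core_frame hD hb hp hq hqa hqb n1 n2 ang
  · have cn : ∀ z : ℂ, ‖starRingEnd ℂ z‖ = ‖z‖ := fun z => RCLike.norm_conj z
    have h := @core_frame (starRingEnd ℂ p) (starRingEnd ℂ b) (starRingEnd ℂ q) D hD
      (by rw [← cn]; simpa using hb) (by rwa [cn])
      (by
        rw [cn]
        rcases hq with hq | hq
        · right; rw [← cn]; simpa [cn] using hq
        · left; rw [← cn]; simpa using hq)
      (by rw [← cn]; simpa using hqa) (by rw [← cn]; simpa using hqb)
      (by rw [← cn, cn p]; simpa using n1)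
      (by rw [← cn, ← cn (_ - starRingEnd ℂ b)]; simpa using n2)
      (by simpa using ang)
    rw [← cn] at h
    have e : (starRingEnd ℂ) ((starRingEnd ℂ) p - (1 + 0.083 * ((starRingEnd ℂ) b - 2)))
        = p - (1 + 0.083 * (b - 2)) := by
      have : (starRingEnd ℂ) (0.083 : ℂ) = 0.083 := by
        rw [show (0.083 : ℂ) = ((0.083 : ℝ) : ℂ) by norm_num, Complex.conj_ofReal]
      simp [this, Complex.conj_ofNat]
    rwa [e] at h

theorem geo_point {ε : ℝ} (hε : ε < Real.pi/180) {a b c p q : ℂ} {D : ℝ} (habc : NE ε a b c)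
    (hD : D ≤ 1.021 * ‖a - c‖) (hpc : ‖p - c‖ ≤ D) (hN : NE ε c p q)
    (hqa : ‖q - a‖ ≤ D) (hqb : ‖q - b‖ ≤ D)
    (n1 : ‖p - a‖ ≤ ‖p - c‖) (n2 : ‖p - a‖ ≤ ‖p - b‖)
    (ang : 0 ≤ (p - a).re * (b - c).re + (p - a).im * (b - c).im) :
    ‖p - (a + 0.083 * (b + c - 2 * a))‖ ≤ 0.181 * ‖a - c‖ := by
  have hac : a ≠ c := habc.swap23.ne hε
  have g1 := (habc.swap23.swap12.geom hε).1
  have g2 := (hN.geom hε).1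
  obtain ⟨z, hz⟩ : ∃ z, a = c + z := ⟨a - c, by ring⟩
  have hz0 : z ≠ 0 := by rintro rfl; simp at hz; exact hac hz
  subst hz
  obtain ⟨P, rfl⟩ : ∃ P, p = c + z * P := ⟨(p-c)/z, by field_simp; ring⟩
  obtain ⟨B, rfl⟩ : ∃ P, b = c + z * P := ⟨(b-c)/z, by field_simp; ring⟩
  obtain ⟨Q, rfl⟩ : ∃ P, q = c + z * P := ⟨(q-c)/z, by field_simp; ring⟩
  have zp : 0 < ‖z‖ := norm_pos_iff.2 hz0
  have fac : ∀ x y : ℂ, ∀ r : ℝ, x = z * y → (‖x‖ ≤ r * ‖z‖ → ‖y‖ ≤ r) := by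
    rintro x y r rfl h
    rw [norm_mul, mul_comm] at h
    exact le_of_mul_le_mul_right h zp
  have fac2 : ∀ x y x' y' : ℂ, ∀ r : ℝ, x = z * y → x' = z * y' → (‖x‖ ≤ r * ‖x'‖ → ‖y‖ ≤ r * ‖y'‖) := by
    rintro x y x' y' r rfl rfl h
    rw [norm_mul, norm_mul] at h
    have : ‖z‖ * ‖y‖ ≤ ‖z‖ * (r * ‖y'‖) := by linarith
    exact le_of_mul_le_mul_left this zp
  have hDz : D = D / ‖z‖ * ‖z‖ := by field_simp
  have ez : c + z - c = z := by ring
  rw [ez] at hD g1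
  rw [hDz] at hpc hqa hqb
  have h := @core_frame' P B Q (D/‖z‖) (by rw [div_le_iff₀ zp]; exact hD)
    (by
      rcases g1 with g1 | g1
      · left; exact fac _ _ _ (by ring) g1
      · right; exact fac _ _ _ (by ring) g1)
    (fac _ _ _ (by ring) hpc)
    (by
      rcases g2 with g2 | g2
      · left; exact fac2 _ _ _ _ _ (by ring) (by ring) g2
      · right; exact fac2 _ _ _ _ _ (by ring) (by ring) g2)
    (fac _ _ _ (by ring) hqa) (fac _ _ _ (by ring) hqb)
    (by
      have := fac2 (c + z * P - (c + z)) (P-1) (c + z * P - c) P 1 (by ring) (by ring) (by rw [one_mul]; exact n1)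
      linarith)
    (by
      have := fac2 (c + z * P - (c + z)) (P-1) (c + z * P - (c + z * B)) (P-B) 1 (by ring) (by ring) (by rw [one_mul]; exact n2)
      linarith)
    (by
      have e1 : c + z * P - (c + z) = z * (P - 1) := by ring
      have e2 : c + z * B - c = z * B := by ring
      rw [e1, e2] at ang
      simp only [Complex.mul_re, Complex.mul_im] at ang
      have : 0 ≤ (z.re^2 + z.im^2) * ((P - 1).re * B.re + (P - 1).im * B.im) := by nlinarith
      rw [← normsq] at this
      exact nonneg_of_mul_nonneg_right this (by positivity))
  have e : c + z * P - (c + z + 0.083 * (c + z * B + c - 2 * (c + z))) = z * (P - (1 + 0.083 * (B - 2))) := by ring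
  rw [e, norm_mul, ez, mul_comm]
  gcongr

/-- the shifted centre -/
def ctr (a b c : ℂ) : ℂ := a + 0.083 * (b + c - 2 * a)

theorem ctr_comm (a b c : ℂ) : ctr a b c = ctr a c b := by unfold ctr; ring

structure Conf (ε : ℝ) (S : Set ℂ) (a b c : ℂ) (D : ℝ) : Prop where
  ha : a ∈ S
  hb : b ∈ S
  hc : c ∈ S
  hN : NE ε a b c
  hD : ∀ x ∈ S, ∀ y ∈ S, ‖x - y‖ ≤ D
  hab : D ≤ 1.021 * ‖a - b‖
  hbc : D ≤ 1.021 * ‖b - c‖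
  hac : D ≤ 1.021 * ‖a - c‖
  cov : ∀ x ∈ S, ∀ y ∈ S, x ≠ y → ∃ z ∈ S, NE ε x y z

theorem Conf.swap12 {ε : ℝ} {S : Set ℂ} {a b c : ℂ} {D : ℝ} (h : Conf ε S a b c D) :
    Conf ε S b a c D :=
  ⟨h.hb, h.ha, h.hc, h.hN.swap12, h.hD, by rw [norm_sub_rev]; exact h.hab, h.hac, h.hbc, h.cov⟩

theorem Conf.swap23 {ε : ℝ} {S : Set ℂ} {a b c : ℂ} {D : ℝ} (h : Conf ε S a b c D) :
    Conf ε S a c b D :=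
  ⟨h.ha, h.hc, h.hb, h.hN.swap23, h.hD, h.hac, by rw [norm_sub_rev]; exact h.hbc, h.hab, h.cov⟩

theorem Conf.near_aux {ε : ℝ} (hε : ε < Real.pi/180) {S : Set ℂ} {a b c : ℂ} {D : ℝ}
    (h : Conf ε S a b c D) {p : ℂ} (hp : p ∈ S)
    (n1 : ‖p - a‖ ≤ ‖p - c‖) (n2 : ‖p - a‖ ≤ ‖p - b‖)
    (ang : 0 ≤ (p - a).re * (b - c).re + (p - a).im * (b - c).im) :
    ‖p - ctr a b c‖ ≤ 0.181 * D := by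
  have hac : a ≠ c := h.hN.swap23.ne hε
  have hpc : c ≠ p := by
    rintro rfl
    simp at n1
    exact hac (sub_eq_zero.1 n1).symm
  obtain ⟨q, hq, hNq⟩ := h.cov c h.hc p hp hpc
  have := geo_point hε h.hN h.hac (h.hD _ hp _ h.hc) hNq (h.hD _ hq _ h.ha) (h.hD _ hq _ h.hb) n1 n2 ang
  have h2 := h.hD _ h.ha _ h.hc
  unfold ctr
  linarith

theorem Conf.near_a {ε : ℝ} (hε : ε < Real.pi/180) {S : Set ℂ} {a b c : ℂ} {D : ℝ}
    (h : Conf ε S a b c D) {p : ℂ} (hp : p ∈ S)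
    (n1 : ‖p - a‖ ≤ ‖p - b‖) (n2 : ‖p - a‖ ≤ ‖p - c‖) :
    ‖p - ctr a b c‖ ≤ 0.181 * D := by
  rcases le_total 0 ((p - a).re * (b - c).re + (p - a).im * (b - c).im) with hh | hh
  · exact h.near_aux hε hp n2 n1 hh
  · rw [ctr_comm]
    refine h.swap23.near_aux hε hp n1 n2 ?_
    simp only [Complex.sub_re, Complex.sub_im] at hh ⊢
    linarith

def tc (a b c : ℂ) : Fin 3 → ℂ := ![ctr a b c, ctr b c a, ctr c a b]

theorem Conf.near {ε : ℝ} (hε : ε < Real.pi/180) {S : Set ℂ} {a b c : ℂ} {D : ℝ}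
    (h : Conf ε S a b c D) {p : ℂ} (hp : p ∈ S) : ∃ i : Fin 3, ‖p - tc a b c i‖ ≤ 0.181 * D := by
  rcases le_total ‖p - a‖ ‖p - b‖ with h1 | h1
  · rcases le_total ‖p - a‖ ‖p - c‖ with h2 | h2
    · exact ⟨0, h.near_a hε hp h1 h2⟩
    · exact ⟨2, h.swap23.swap12.near_a hε hp h2 (h2.trans h1)⟩
  · rcases le_total ‖p - b‖ ‖p - c‖ with h2 | h2
    · exact ⟨1, h.swap12.swap23.near_a hε hp h2 h1⟩
    · exact ⟨2, h.swap23.swap12.near_a hε hp (h2.trans h1) h2⟩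

theorem Conf.sep {ε : ℝ} {S : Set ℂ} {a b c : ℂ} {D : ℝ}
    (h : Conf ε S a b c D) (i j : Fin 3) (hij : i ≠ j) :
    0.7355 * D ≤ ‖tc a b c i - tc a b c j‖ := by
  have h83 : ‖(0.751 : ℂ)‖ = 0.751 := by
    rw [show (0.751 : ℂ) = ((0.751 : ℝ) : ℂ) by norm_num, Complex.norm_real]; norm_num
  have key : ∀ x y z : ℂ, ‖ctr x y z - ctr y z x‖ = 0.751 * ‖x - y‖ := by
    intro x y z
    rw [← h83, ← norm_mul]; congr 1; unfold ctr; ring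
  have k1 := key a b c
  have k2 := key b c a
  have k3 := key c a b
  have D0 : 0 ≤ D := (norm_nonneg _).trans (h.hD _ h.ha _ h.ha)
  have := h.hab
  have := h.hbc
  have := h.hac
  rw [norm_sub_rev c a] at k3
  fin_cases i <;> fin_cases j <;> simp [tc] at hij ⊢ <;>
    first
    | linarith
    | (rw [norm_sub_rev]; linarith)

/-- If two points of a near-equilateral triangle are in the same class, so is the third. -/
theorem Conf.cls {ε : ℝ} (hε : ε < Real.pi/180) {S : Set ℂ} {a b c : ℂ} {D : ℝ}
    (h : Conf ε S a b c D) {x y z : ℂ} {i j : Fin 3}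
    (hx : ‖x - tc a b c i‖ ≤ 0.181 * D) (hy : ‖y - tc a b c i‖ ≤ 0.181 * D)
    (hz : ‖z - tc a b c j‖ ≤ 0.181 * D) (hN : NE ε x y z) : i = j := by
  by_contra hij
  have s := h.sep i j hij
  have g := (hN.geom hε).2
  have t1 : ‖y - x‖ ≤ 0.362 * D := by
    have := norm_sub_le (y - tc a b c i) (x - tc a b c i)
    rw [show y - tc a b c i - (x - tc a b c i) = y - x by ring] at this
    linarith
  have t2 : ‖tc a b c i - tc a b c j‖ ≤ ‖z - x‖ + 0.362 * D := by
    have e : tc a b c i - tc a b c j = (z - tc a b c j) - (x - tc a b c i) - (z - x) := by ring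
    rw [e]
    have u1 := norm_sub_le ((z - tc a b c j) - (x - tc a b c i)) (z - x)
    have u2 := norm_sub_le (z - tc a b c j) (x - tc a b c i)
    linarith
  have D0 : 0 < D := by
    have h1 := h.hD _ h.ha _ h.hb
    have h2 : 0 < ‖a - b‖ := norm_pos_iff.2 (sub_ne_zero.2 (h.hN.ne hε))
    linarith
  nlinarith

theorem Conf.self_a {ε : ℝ} (hε : ε < Real.pi/180) {S : Set ℂ} {a b c : ℂ} {D : ℝ}
    (h : Conf ε S a b c D) : ‖a - ctr a b c‖ ≤ 0.181 * D := by
  have := h.near_a hε h.ha (by simp) (by simp)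
  exact this

open Classical in
def Ind {X : Type} (N : X → X → X → Prop) (p q r : X) : ℕ := if N p q r then 1 else 0

def cntS {V X : Type} (N : X → X → X → Prop) (A B C : Finset V) (f : V → X) : ℕ :=
  ∑ i ∈ A, ∑ j ∈ B, ∑ k ∈ C, Ind N (f i) (f j) (f k)

def cnt {V X : Type} [Fintype V] (N : X → X → X → Prop) (f : V → X) : ℕ :=
  ∑ i, ∑ j, ∑ k, Ind N (f i) (f j) (f k)

open Classical in
def eqp {V X : Type} [Fintype V] (f : V → X) : ℕ :=
  ∑ i, ∑ j, if f i = f j then 1 else 0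

structure SymRel {X : Type} (N : X → X → X → Prop) : Prop where
  s12 : ∀ {p q r}, N p q r → N q p r
  s23 : ∀ {p q r}, N p q r → N p r q
  ne : ∀ {p q r}, N p q r → p ≠ q

section
variable {V X : Type} [Fintype V] [DecidableEq V] {N : X → X → X → Prop}

theorem Ind_s12 (h : SymRel N) (p q r : X) : Ind N p q r = Ind N q p r := by
  have : N p q r ↔ N q p r := ⟨h.s12, h.s12⟩
  unfold Ind; classical exact if_congr this rfl rfl

theorem Ind_s23 (h : SymRel N) (p q r : X) : Ind N p q r = Ind N p r q := by
  have : N p q r ↔ N p r q := ⟨h.s23, h.s23⟩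
  unfold Ind; classical exact if_congr this rfl rfl

theorem Ind_self (h : SymRel N) (p r : X) : Ind N p p r = 0 := by
  have : ¬ N p p r := fun hh => h.ne hh rfl
  simp [Ind, this]

theorem Ind_self' (h : SymRel N) (p r : X) : Ind N p r p = 0 := by
  rw [Ind_s23 h, Ind_self h]

theorem Ind_self'' (h : SymRel N) (p r : X) : Ind N r p p = 0 := by
  rw [Ind_s12 h, Ind_self' h]

theorem cnt_split (h : SymRel N) (g : V → X) (v : V) :
    cnt N g = cntS N (Finset.univ.erase v) (Finset.univ.erase v) (Finset.univ.erase v) g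
      + 3 * ∑ j ∈ Finset.univ.erase v, ∑ k ∈ Finset.univ.erase v, Ind N (g v) (g j) (g k) := by
  unfold cnt cntS
  have sp : ∀ F : V → ℕ, ∑ i, F i = F v + ∑ i ∈ Finset.univ.erase v, F i := fun F =>
    (Finset.add_sum_erase _ F (Finset.mem_univ v)).symm
  have e1 : ∀ i, ∑ j, ∑ k, Ind N (g i) (g j) (g k) =
      ∑ k ∈ Finset.univ.erase v, Ind N (g i) (g v) (g k) +
      (∑ j ∈ Finset.univ.erase v, Ind N (g i) (g j) (g v) +
      ∑ j ∈ Finset.univ.erase v, ∑ k ∈ Finset.univ.erase v, Ind N (g i) (g j) (g k)) := by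
    intro i
    rw [sp, sp, Ind_self'' h, zero_add]
    congr 1
    rw [← Finset.sum_add_distrib]
    exact Finset.sum_congr rfl fun j _ => sp _
  simp_rw [e1]
  rw [sp, Finset.sum_add_distrib, Finset.sum_add_distrib]
  simp only [Ind_self h, Ind_self' h, Finset.sum_const_zero, zero_add]
  have e2 : ∀ i j, Ind N (g i) (g v) (g j) = Ind N (g v) (g i) (g j) := fun i j => Ind_s12 h _ _ _
  have e3 : ∀ i j, Ind N (g i) (g j) (g v) = Ind N (g v) (g i) (g j) := fun i j => by
    rw [Ind_s23 h, Ind_s12 h]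
  simp_rw [e2, e3]
  ring

def Dg (N : X → X → X → Prop) (f : V → X) (p : X) : ℕ := ∑ j, ∑ k, Ind N p (f j) (f k)

open Classical in
def Cl (f : V → X) (p : X) : ℕ := ∑ j, if p = f j then 1 else 0

theorem Dg_erase (h : SymRel N) (f : V → X) (v : V) (p : X) (hp : ∀ w, ¬ N p (f v) (f w)) :
    Dg N f p = ∑ j ∈ Finset.univ.erase v, ∑ k ∈ Finset.univ.erase v, Ind N p (f j) (f k) := by
  have sp : ∀ F : V → ℕ, ∑ i, F i = F v + ∑ i ∈ Finset.univ.erase v, F i := fun F =>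
    (Finset.add_sum_erase _ F (Finset.mem_univ v)).symm
  unfold Dg
  have z : ∀ w, Ind N p (f v) (f w) = 0 := fun w => by simp [Ind, hp w]
  rw [sp]
  simp only [z, Finset.sum_const_zero, zero_add]
  refine Finset.sum_congr rfl fun j _ => ?_
  rw [sp, Ind_s23 h, z, zero_add]

theorem cnt_clone (h : SymRel N) (f : V → X) (u v : V) 
    (unc : ∀ w, ¬ N (f u) (f v) (f w)) :
    cnt N (Function.update f v (f u)) + 3 * Dg N f (f v) = cnt N f + 3 * Dg N f (f u) := by
  rw [cnt_split h _ v, cnt_split h f v, Dg_erase h f v (f u) unc,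
    Dg_erase h f v (f v) (fun w hw => h.ne hw rfl)]
  have e : ∀ i ∈ Finset.univ.erase v, Function.update f v (f u) i = f i := fun i hi =>
    Function.update_of_ne (Finset.ne_of_mem_erase hi) _ _
  have e1 : cntS N (Finset.univ.erase v) (Finset.univ.erase v) (Finset.univ.erase v) (Function.update f v (f u))
    = cntS N (Finset.univ.erase v) (Finset.univ.erase v) (Finset.univ.erase v) f := by
    unfold cntS
    refine Finset.sum_congr rfl fun i hi => Finset.sum_congr rfl fun j hj => Finset.sum_congr rfl fun k hk => ?_
    rw [e i hi, e j hj, e k hk]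
  have e2 : ∑ j ∈ Finset.univ.erase v, ∑ k ∈ Finset.univ.erase v,
      Ind N (Function.update f v (f u) v) (Function.update f v (f u) j) (Function.update f v (f u) k)
      = ∑ j ∈ Finset.univ.erase v, ∑ k ∈ Finset.univ.erase v, Ind N (f u) (f j) (f k) := by
    refine Finset.sum_congr rfl fun j hj => Finset.sum_congr rfl fun k hk => ?_
    rw [e j hj, e k hk, Function.update_self]
  rw [e1, e2]
  ring

theorem eqp_split (g : V → X) (v : V) : 
    eqp g = ∑ i ∈ Finset.univ.erase v, ∑ j ∈ Finset.univ.erase v, (open Classical in if g i = g j then 1 else 0)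
     + 2 * ∑ j ∈ Finset.univ.erase v, (open Classical in if g v = g j then 1 else 0) + 1 := by
  classical
  have sp : ∀ F : V → ℕ, ∑ i, F i = F v + ∑ i ∈ Finset.univ.erase v, F i := fun F =>
    (Finset.add_sum_erase _ F (Finset.mem_univ v)).symm
  unfold eqp
  rw [sp]
  simp_rw [sp]
  rw [Finset.sum_add_distrib]
  simp only [if_true]
  have : ∀ i, (if g i = g v then 1 else 0) = (if g v = g i then 1 else 0) := fun i => by
    simp only [eq_comm]
  simp_rw [this]
  ring

theorem eqp_clone (f : V → X) (u v : V) (huv : f u ≠ f v) :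
    eqp (Function.update f v (f u)) + 2 * Cl f (f v) = eqp f + 2 * Cl f (f u) + 2 := by
  classical
  have sp : ∀ F : V → ℕ, ∑ i, F i = F v + ∑ i ∈ Finset.univ.erase v, F i := fun F =>
    (Finset.add_sum_erase _ F (Finset.mem_univ v)).symm
  have e : ∀ i ∈ Finset.univ.erase v, Function.update f v (f u) i = f i := fun i hi =>
    Function.update_of_ne (Finset.ne_of_mem_erase hi) _ _
  rw [eqp_split _ v, eqp_split f v]
  unfold Cl
  rw [sp, sp]
  simp only [huv, if_true, if_false, Function.update_self]
  have e1 : ∑ i ∈ Finset.univ.erase v, ∑ j ∈ Finset.univ.erase v,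
      (if Function.update f v (f u) i = Function.update f v (f u) j then 1 else 0)
      = ∑ i ∈ Finset.univ.erase v, ∑ j ∈ Finset.univ.erase v, (if f i = f j then 1 else 0) := by
    refine Finset.sum_congr rfl fun i hi => Finset.sum_congr rfl fun j hj => ?_
    rw [e i hi, e j hj]
  have e2 : ∑ j ∈ Finset.univ.erase v, (if f u = Function.update f v (f u) j then 1 else 0)
      = ∑ j ∈ Finset.univ.erase v, (if f u = f j then 1 else 0) := by
    refine Finset.sum_congr rfl fun j hj => ?_
    rw [e j hj]
  rw [e1, e2]
  ring

theorem Ind_le (p q r : X) : Ind N p q r ≤ 1 := by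
  unfold Ind; split_ifs <;> simp

theorem cntS_le (A B C : Finset V) (f : V → X) : cntS N A B C f ≤ A.card * B.card * C.card := by
  unfold cntS
  calc _ ≤ ∑ i ∈ A, ∑ j ∈ B, ∑ k ∈ C, 1 :=
        Finset.sum_le_sum fun i _ => Finset.sum_le_sum fun j _ => Finset.sum_le_sum fun k _ => Ind_le _ _ _
    _ = _ := by simp [mul_assoc]

theorem eqp_le (f : V → X) : eqp f ≤ Fintype.card V ^ 2 := by
  unfold eqp
  calc _ ≤ ∑ i : V, ∑ j : V, 1 :=
        Finset.sum_le_sum fun i _ => Finset.sum_le_sum fun j _ => by split_ifs <;> simp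
    _ = _ := by simp [pow_two]

/-- Zykov symmetrization -/
theorem exists_covering (h : SymRel N) (f₀ : V → X) :
    ∃ f : V → X, cnt N f₀ ≤ cnt N f ∧ ∀ u v, f u ≠ f v → ∃ w, N (f u) (f v) (f w) := by
  set M := Fintype.card V ^ 2 + 1 with hM
  let Φ : (V → X) → ℕ := fun f => M * cnt N f + eqp f
  have hb : ∀ f, Φ f ≤ M * (Fintype.card V * Fintype.card V * Fintype.card V) + M := by
    intro f
    have h1 : cnt N f ≤ Fintype.card V * Fintype.card V * Fintype.card V := cntS_le (N := N) Finset.univ Finset.univ Finset.univ f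
    have h2 := eqp_le f
    have h3 := Nat.mul_le_mul_left M h1
    simp only [Φ]
    omega
  obtain ⟨f, hf⟩ : ∃ f, ∀ g, Φ g ≤ Φ f := by
    have hbdd : BddAbove (Set.range Φ) := ⟨_, by rintro _ ⟨f, rfl⟩; exact hb f⟩
    have hmem := Nat.sSup_mem (s := Set.range Φ) ⟨_, ⟨f₀, rfl⟩⟩ hbdd
    obtain ⟨f, hf⟩ := hmem
    exact ⟨f, fun g => by rw [hf]; exact le_csSup hbdd ⟨g, rfl⟩⟩
  refine ⟨f, ?_, ?_⟩
  · have h1 := hf f₀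
    have h2 := eqp_le f
    simp only [Φ] at h1
    by_contra hh
    push Not at hh
    have : M * (cnt N f + 1) ≤ M * cnt N f₀ := Nat.mul_le_mul_left M hh
    rw [mul_add, mul_one] at this
    omega
  · intro u v huv
    by_contra hh
    push Not at hh
    have step : ∀ u v, f u ≠ f v → (∀ w, ¬ N (f u) (f v) (f w)) →
        Dg N f (f u) < Dg N f (f v) ∨ (Dg N f (f u) = Dg N f (f v) ∧ Cl f (f u) < Cl f (f v)) := by
      intro u v huv unc
      have c1 := cnt_clone h f u v unc
      have c2 := eqp_clone f u v huv
      have c3 := hf (Function.update f v (f u))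
      have c4 := eqp_le f
      simp only [Φ] at c3
      rcases lt_trichotomy (Dg N f (f u)) (Dg N f (f v)) with hlt | heq | hgt
      · exact Or.inl hlt
      · refine Or.inr ⟨heq, ?_⟩
        have : cnt N (Function.update f v (f u)) = cnt N f := by omega
        rw [this] at c3
        omega
      · exfalso
        have : cnt N f + 1 ≤ cnt N (Function.update f v (f u)) := by omega
        have := Nat.mul_le_mul_left M this
        rw [mul_add, mul_one] at this
        omega
    have s1 := step u v huv hh
    have s2 := step v u huv.symm (fun w hw => hh w (h.s12 hw))
    omega

theorem cntS_eq (A : Finset V) (f : V → X) :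
    cntS N A A A f = cnt N (fun x : A => f x) := by
  unfold cntS cnt
  rw [← Finset.sum_coe_sort]
  refine Finset.sum_congr rfl fun i _ => ?_
  rw [← Finset.sum_coe_sort]
  refine Finset.sum_congr rfl fun j _ => ?_
  rw [← Finset.sum_coe_sort]

theorem cnt_class (h : SymRel N) (f : V → X) (g : V → Fin 3)
    (hg : ∀ x y z, N (f x) (f y) (f z) → g x = g y → g x = g z) (A : Fin 3 → Finset V)
    (hA : ∀ i, A i = Finset.univ.filter fun v => g v = i) :
    cnt N f ≤ cntS N (A 0) (A 0) (A 0) f + cntS N (A 1) (A 1) (A 1) f + cntS N (A 2) (A 2) (A 2) f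
      + 6 * ((A 0).card * (A 1).card * (A 2).card) := by
  have sp : ∀ F : V → ℕ, ∑ i, F i = ∑ c, ∑ i ∈ A c, F i := by
    intro F
    rw [← Finset.sum_fiberwise Finset.univ g F]
    exact Finset.sum_congr rfl fun c _ => by rw [hA]
  have e : cnt N f = ∑ c1, ∑ c2, ∑ c3, cntS N (A c1) (A c2) (A c3) f := by
    unfold cnt cntS
    rw [sp]
    refine Finset.sum_congr rfl fun c1 _ => ?_
    have e1 : ∀ i, ∑ j, ∑ k, Ind N (f i) (f j) (f k)
        = ∑ c2, ∑ c3, ∑ j ∈ A c2, ∑ k ∈ A c3, Ind N (f i) (f j) (f k) := by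
      intro i
      rw [sp]
      refine Finset.sum_congr rfl fun c2 _ => ?_
      rw [Finset.sum_comm]
      rw [sp]
      exact Finset.sum_congr rfl fun c3 _ => Finset.sum_comm
    simp_rw [e1]
    rw [Finset.sum_comm]
    refine Finset.sum_congr rfl fun c2 _ => ?_
    rw [Finset.sum_comm]
  have mem : ∀ {v i}, v ∈ A i → g v = i := by
    intro v i hv
    rw [hA] at hv
    simpa using hv
  have z : ∀ c1 c2 c3, (c1 = c2 ∧ c1 ≠ c3 ∨ c1 = c3 ∧ c1 ≠ c2 ∨ c2 = c3 ∧ c1 ≠ c2) →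
      cntS N (A c1) (A c2) (A c3) f = 0 := by
    intro c1 c2 c3 hc
    unfold cntS
    refine Finset.sum_eq_zero fun i hi => Finset.sum_eq_zero fun j hj => Finset.sum_eq_zero fun k hk => ?_
    have hn : ¬ N (f i) (f j) (f k) := by
      intro hN
      have m1 := mem hi
      have m2 := mem hj
      have m3 := mem hk
      have g1 := hg _ _ _ hN
      have g2 := hg _ _ _ (h.s23 hN)
      have g3 := hg _ _ _ (h.s23 (h.s12 hN))
      rw [m1, m2, m3] at g1 g2 g3
      rcases hc with ⟨rfl, hc⟩ | ⟨rfl, hc⟩ | ⟨rfl, hc⟩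
      · exact hc (g1 rfl)
      · exact hc (g2 rfl)
      · exact hc (g3 rfl).symm
    simp [Ind, hn]
  have b1 := cntS_le (N := N) (A 0) (A 1) (A 2) f
  have b2 := cntS_le (N := N) (A 0) (A 2) (A 1) f
  have b3 := cntS_le (N := N) (A 1) (A 0) (A 2) f
  have b4 := cntS_le (N := N) (A 1) (A 2) (A 0) f
  have b5 := cntS_le (N := N) (A 2) (A 0) (A 1) f
  have b6 := cntS_le (N := N) (A 2) (A 1) (A 0) f
  rw [e]
  simp only [Fin.sum_univ_three]
  rw [z 0 0 1 (by decide), z 0 0 2 (by decide), z 0 1 0 (by decide), z 0 1 1 (by decide),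
    z 0 2 0 (by decide), z 0 2 2 (by decide), z 1 0 0 (by decide), z 1 0 1 (by decide),
    z 1 1 0 (by decide), z 1 1 2 (by decide), z 1 2 1 (by decide), z 1 2 2 (by decide),
    z 2 0 0 (by decide), z 2 0 2 (by decide), z 2 1 1 (by decide), z 2 1 2 (by decide),
    z 2 2 0 (by decide), z 2 2 1 (by decide)]
  nlinarith
end

theorem NE.symRel {ε : ℝ} (hε : ε < Real.pi/180) : SymRel (NE ε) :=
  ⟨fun h => h.swap12, fun h => h.swap23, fun h => h.ne hε⟩

theorem upper (h : ℕ → ℕ) (hrec : HRec h) (ε : ℝ) (hε : ε < Real.pi/180) :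
    ∀ n : ℕ, ∀ (V : Type) [Fintype V] [DecidableEq V] (f : V → ℂ), Fintype.card V = n →
      cnt (NE ε) f ≤ 6 * h n := by
  intro n
  induction n using Nat.strong_induction_on with
  | _ n ih =>
  intro V _ _ f₀ hV
  have hS := NE.symRel hε
  obtain ⟨f, hle, hcov⟩ := exists_covering hS f₀
  refine hle.trans ?_
  by_cases hall : ∀ u v, f u = f v
  · have : cnt (NE ε) f = 0 := by
      unfold cnt
      refine Finset.sum_eq_zero fun i _ => Finset.sum_eq_zero fun j _ => Finset.sum_eq_zero fun k _ => ?_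
      rw [hall i j]; exact Ind_self hS _ _
    omega
  push Not at hall
  obtain ⟨u0, v0, huv0⟩ := hall
  haveI : Nonempty (V × V) := ⟨(u0, v0)⟩
  obtain ⟨⟨u, v⟩, hmax⟩ := Finite.exists_max (fun x : V × V => ‖f x.1 - f x.2‖)
  simp only [Prod.forall] at hmax
  have hDpos : 0 < ‖f u - f v‖ := lt_of_lt_of_le (norm_pos_iff.2 (sub_ne_zero.2 huv0)) (hmax u0 v0)
  have huv : f u ≠ f v := sub_ne_zero.1 (norm_pos_iff.1 hDpos)
  obtain ⟨w, hw⟩ := hcov u v huv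
  set D := ‖f u - f v‖ with hDdef
  have hconf : Conf ε (Set.range f) (f u) (f v) (f w) D := by
    refine ⟨⟨u, rfl⟩, ⟨v, rfl⟩, ⟨w, rfl⟩, hw, ?_, ?_, ?_, ?_, ?_⟩
    · rintro _ ⟨x, rfl⟩ _ ⟨y, rfl⟩; exact hmax x y
    · linarith
    · have := (NE.geom hε hw.swap12.swap23).2
      rw [norm_sub_rev (f v)]; exact this
    · have := (NE.geom hε hw.swap23).2
      rw [norm_sub_rev (f u) (f w), hDdef, norm_sub_rev (f u)]; exact this
    · rintro _ ⟨x, rfl⟩ _ ⟨y, rfl⟩ hxy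
      obtain ⟨z, hz⟩ := hcov x y hxy
      exact ⟨_, ⟨z, rfl⟩, hz⟩
  choose g hg using fun x : V => hconf.near hε (p := f x) ⟨x, rfl⟩
  have huniq : ∀ x i, ‖f x - tc (f u) (f v) (f w) i‖ ≤ 0.181 * D → g x = i := by
    intro x i hi
    by_contra hne
    have s := hconf.sep _ _ hne
    have t := norm_sub_le_norm_sub_add_norm_sub (tc (f u) (f v) (f w) (g x)) (f x) (tc (f u) (f v) (f w) i)
    have := hg x
    rw [norm_sub_rev] at this
    linarith
  have gu : g u = 0 := huniq u 0 (hconf.self_a hε)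
  have gv : g v = 1 := huniq v 1 (hconf.swap12.swap23.self_a hε)
  have gw : g w = 2 := huniq w 2 (hconf.swap23.swap12.self_a hε)
  let A : Fin 3 → Finset V := fun i => Finset.univ.filter fun v => g v = i
  have hcl := cnt_class hS f g (fun x y z hN hxy => hconf.cls hε (hg x) (by rw [hxy]; exact hg y) (hg z) hN) A
    (fun i => rfl)
  have hsum : (A 0).card + (A 1).card + (A 2).card = n := by
    have := Finset.card_eq_sum_card_fiberwise (f := g) (s := Finset.univ) (t := Finset.univ) (fun _ _ => by simp)
    rw [Fin.sum_univ_three, Finset.card_univ, hV] at this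
    exact this.symm
  have p0 : 0 < (A 0).card := Finset.card_pos.2 ⟨u, by simp [A, gu]⟩
  have p1 : 0 < (A 1).card := Finset.card_pos.2 ⟨v, by simp [A, gv]⟩
  have p2 : 0 < (A 2).card := Finset.card_pos.2 ⟨w, by simp [A, gw]⟩
  have ub := (hrec.2.2.2 n (by omega)).2 ⟨(A 0).card, (A 1).card, (A 2).card, hsum, by omega, by omega, by omega, rfl⟩
  rw [cntS_eq, cntS_eq, cntS_eq] at hcl
  have i0 := ih (A 0).card (by omega) (A 0) (fun x => f x) (by simp)
  have i1 := ih (A 1).card (by omega) (A 1) (fun x => f x) (by simp)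
  have i2 := ih (A 2).card (by omega) (A 2) (fun x => f x) (by simp)
  omega

theorem tri_inj {p : Fin 3 → Plane} (hp : IsTriangle p) : Function.Injective p :=
  (affineIndependent_iff_not_collinear.2 hp).injective

theorem equi_angle (T : Fin 3 → Plane) (hT : IsTriangle T)
    (heq1 : dist (T 0) (T 1) = dist (T 1) (T 2))
    (heq2 : dist (T 1) (T 2) = dist (T 2) (T 0)) (i : Fin 3) : triAngle T i = Real.pi / 3 := by
  have hi := tri_inj hT
  have h10 : T 1 ≠ T 0 := fun h => by simpa using hi h
  have a1 : ∠ (T 0) (T 1) (T 2) = ∠ (T 0) (T 2) (T 1) :=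
    angle_eq_angle_of_dist_eq (by rw [heq1, heq2, dist_comm])
  have a2 : ∠ (T 1) (T 0) (T 2) = ∠ (T 1) (T 2) (T 0) :=
    angle_eq_angle_of_dist_eq (by rw [dist_comm, heq1])
  have a3 := angle_add_angle_add_angle_eq_pi (T 2) h10
  rw [angle_comm (T 2) (T 0)] at a3
  rw [angle_comm (T 1) (T 2)] at a3 a2
  fin_cases i <;> simp only [triAngle, Fin.reduceFinMk, Fin.isValue, Fin.reduceAdd, Fin.zero_eta, zero_add]
  · linarith
  · rw [angle_comm]; change ∠ (T 0) (T 1) (T 2) = _; linarith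
  · change ∠ (T 0) (T 2) (T 1) = _; linarith

def Psi : Plane ≃ₗᵢ[ℝ] ℂ := Complex.orthonormalBasisOneI.repr.symm

theorem Psi_angle (a b c : Plane) : ∠ (Psi a) (Psi b) (Psi c) = ∠ a b c :=
  AffineIsometry.angle_map (Psi.toLinearIsometry.toAffineIsometry) a b c

theorem fin3_cases : ∀ i j k : Fin 3, i ≠ j → j ≠ k → i ≠ k →
    (i = j + 1 ∧ k = j + 2) ∨ (k = j + 1 ∧ i = j + 2) := by decide

theorem NE_of_tri {ε : ℝ} {p : Fin 3 → Plane} (hp : ∀ i, |triAngle p i - Real.pi/3| < ε)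
    (i j k : Fin 3) (hij : i ≠ j) (hjk : j ≠ k) (hik : i ≠ k) :
    NE ε (Psi (p i)) (Psi (p j)) (Psi (p k)) := by
  have key : ∀ i j k : Fin 3, i ≠ j → j ≠ k → i ≠ k → |∠ (p i) (p j) (p k) - Real.pi/3| < ε := by
    intro i j k hij hjk hik
    have := hp j
    unfold triAngle at this
    rcases fin3_cases i j k hij hjk hik with ⟨rfl, rfl⟩ | ⟨rfl, rfl⟩
    · exact this
    · rw [angle_comm]; exact this
  refine ⟨?_, ?_, ?_⟩ <;> rw [Psi_angle]
  · exact key _ _ _ hij.symm hik hjk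
  · exact key _ _ _ hij hjk hik
  · exact key _ _ _ hik hjk.symm hij

theorem cntS_eq2 {V X : Type} {N : X → X → X → Prop} (A : Finset V) (f : V → X) :
    cntS N A A A f = cnt N (fun x : A => f x) := by
  unfold cntS cnt
  rw [← Finset.sum_coe_sort]
  refine Finset.sum_congr rfl fun i _ => ?_
  rw [← Finset.sum_coe_sort]
  refine Finset.sum_congr rfl fun j _ => ?_
  rw [← Finset.sum_coe_sort]

open Classical in
theorem cntS_card {V X : Type} {N : X → X → X → Prop} (A : Finset V) (f : V → X) :
    cntS N A A A f = ((A ×ˢ A ×ˢ A).filter fun t => N (f t.1) (f t.2.1) (f t.2.2)).card := by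
  rw [Finset.card_filter, Finset.sum_product]
  unfold cntS
  refine Finset.sum_congr rfl fun i _ => ?_
  rw [Finset.sum_product]
  rfl

theorem simSet_finite (ε : ℝ) (T : Fin 3 → Plane) (P : Finset Plane) :
    {S : Finset Plane | S ⊆ P ∧ S.card = 3 ∧ FormsSimilar ε T S}.Finite :=
  Set.Finite.subset P.powerset.finite_toSet fun S hS => by simpa using hS.1

theorem simCount_le (h : ℕ → ℕ) (hrec : HRec h) (ε : ℝ) (hε : ε < Real.pi/180)
    (T : Fin 3 → Plane) (hT : ∀ i, triAngle T i = Real.pi / 3) (P : Finset Plane) :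
    simCount ε T P ≤ h P.card := by
  classical
  have hub := upper h hrec ε hε P.card P (fun x => Psi x) (by simp)
  rw [← cntS_eq2 P (fun x => Psi x), cntS_card] at hub
  set F := (simSet_finite ε T P).toFinset with hF
  have hc : simCount ε T P = F.card := by
    unfold simCount; rw [Set.ncard_eq_toFinset_card _ (simSet_finite ε T P)]
  have hmem : ∀ S ∈ F, S ⊆ P ∧ S.card = 3 ∧ FormsSimilar ε T S := fun S hS => by
    simpa [hF] using hS
  have hex : ∀ S : Finset Plane, ∃ p : Fin 3 → Plane, S ∈ F → ((S : Set Plane) = Set.range p ∧ 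
      Function.Injective p ∧ ∀ i, |triAngle p i - Real.pi/3| < ε) := by
    intro S
    by_cases hS : S ∈ F
    · obtain ⟨_, _, p, hp, ht, σ, hσ⟩ := hmem S hS
      exact ⟨p, fun _ => ⟨hp, tri_inj ht, fun i => by have := hσ i; rwa [hT] at this⟩⟩
    · exact ⟨fun _ => 0, fun h => absurd h hS⟩
  choose p hp using hex
  have hle : (F ×ˢ (Finset.univ : Finset (Equiv.Perm (Fin 3)))).card ≤ _ :=
    Finset.card_le_card_of_injOn
      (t := (P ×ˢ P ×ˢ P).filter fun t => NE ε (Psi t.1) (Psi t.2.1) (Psi t.2.2))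
      (fun x => (p x.1 (x.2 0), p x.1 (x.2 1), p x.1 (x.2 2))) (by
        rintro ⟨S, σ⟩ hS
        simp only [Finset.coe_product, Set.mem_prod, Finset.mem_coe, Finset.mem_univ, and_true] at hS
        obtain ⟨h1, h2, h3⟩ := hp S hS
        have hin : ∀ i, p S i ∈ P := fun i => (hmem S hS).1 (by
          rw [← Finset.mem_coe, h1]; exact ⟨i, rfl⟩)
        simp only [Finset.coe_filter, Finset.mem_product, Set.mem_setOf_eq]
        exact ⟨⟨hin _, hin _, hin _⟩, NE_of_tri h3 _ _ _ (by simp) (by simp) (by simp)⟩) (by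
        rintro ⟨S, σ⟩ hS ⟨S', σ'⟩ hS' he
        simp only [Finset.coe_product, Set.mem_prod, Finset.mem_coe, Finset.mem_univ, and_true] at hS hS'
        simp only [Prod.mk.injEq] at he
        obtain ⟨e0, e1, e2⟩ := he
        have e : ∀ i, p S (σ i) = p S' (σ' i) := by
          intro i; fin_cases i
          · exact e0
          · exact e1
          · exact e2
        have hr : (S : Set Plane) = S' := by
          rw [(hp S hS).1, (hp S' hS').1, ← σ.surjective.range_comp (p S), ← σ'.surjective.range_comp (p S')]
          congr 1; funext i; exact e i
        have hr := Finset.coe_injective hr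
        subst hr
        have : σ = σ' := Equiv.ext fun i => (hp S hS).2.1 (e i)
        rw [this])
  rw [Finset.card_product, Finset.card_univ, Fintype.card_perm, Fintype.card_fin] at hle
  simp only [Nat.factorial] at hle
  rw [hc]
  omega

def mp (c : Plane) (s : ℝ) (x : Plane) : Plane := c + s • x

theorem mp_inj (c : Plane) {s : ℝ} (hs : 0 < s) : Function.Injective (mp c s) := by
  intro x y hxy
  have := add_left_cancel hxy
  exact smul_right_injective _ hs.ne' this

theorem mp_angle (c : Plane) {s : ℝ} (hs : 0 < s) (x y z : Plane) :
    ∠ (mp c s x) (mp c s y) (mp c s z) = ∠ x y z := by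
  unfold EuclideanGeometry.angle mp
  simp only [vsub_eq_sub, add_sub_add_left_eq_sub, ← smul_sub]
  rw [InnerProductGeometry.angle_smul_smul hs.ne']

theorem mp_tri (c : Plane) {s : ℝ} (hs : 0 < s) {p : Fin 3 → Plane} (hp : IsTriangle p) :
    IsTriangle (mp c s ∘ p) := by
  let M : Plane →ᵃ[ℝ] Plane := AffineMap.const ℝ Plane c + s • AffineMap.id ℝ Plane
  have hM : ⇑M = mp c s := by ext x; simp [M, mp]
  have h1 := (affineIndependent_iff_not_collinear.2 hp).map' M (by rw [hM]; exact mp_inj c hs)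
  rw [hM] at h1
  exact affineIndependent_iff_not_collinear.1 h1

theorem mp_forms (c : Plane) {s : ℝ} (hs : 0 < s) {ε : ℝ} {T : Fin 3 → Plane} {S : Finset Plane}
    [DecidableEq Plane] (hS : FormsSimilar ε T S) : FormsSimilar ε T (S.image (mp c s)) := by
  obtain ⟨p, hp, ht, σ, hσ⟩ := hS
  refine ⟨mp c s ∘ p, ?_, mp_tri c hs ht, σ, fun i => ?_⟩
  · rw [Finset.coe_image, hp, Set.range_comp]
  · have : triAngle (mp c s ∘ p) i = triAngle p i := mp_angle c hs _ _ _
    rw [this]; exact hσ i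

open Filter Topology in
theorem good_ev {ε : ℝ} (hε : 0 < ε) {T : Fin 3 → Plane} (hT : IsTriangle T) (q : Fin 3 → Plane) :
    ∀ᶠ s : ℝ in 𝓝 0, IsTriangle (fun i => mp (T i) s (q i)) ∧
      ∀ i, |triAngle (fun i => mp (T i) s (q i)) i - triAngle T i| < ε := by
  have hcont : Continuous (fun s : ℝ => fun i => mp (T i) s (q i)) := by
    unfold mp; fun_prop
  have h0 : (fun i => mp (T i) 0 (q i)) = T := by funext i; simp [mp]
  refine Filter.Eventually.and ?_ ?_
  · have ho := (isOpen_setOfPred_affineIndependent (𝕜 := ℝ) (E := Plane) (ι := Fin 3)).preimage hcont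
    have : (0 : ℝ) ∈ ((fun s : ℝ => fun i => mp (T i) s (q i)) ⁻¹' {p | AffineIndependent ℝ p}) := by
      change AffineIndependent ℝ (fun i => mp (T i) 0 (q i))
      rw [h0]; exact affineIndependent_iff_not_collinear.2 hT
    filter_upwards [ho.mem_nhds this] with s hs
    exact affineIndependent_iff_not_collinear.1 hs
  · rw [Filter.eventually_all]
    intro i
    have hi := tri_inj hT
    have hc : ContinuousAt (fun s : ℝ => triAngle (fun i => mp (T i) s (q i)) i) 0 := by
      have h1 : T (i+1) ≠ T i := fun h => by have := hi h; revert this; clear * -; revert i; decide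
      have h2 : T (i+2) ≠ T i := fun h => by have := hi h; revert this; clear * -; revert i; decide
      have hc1 : ContinuousAt (fun s : ℝ => ((mp (T (i+1)) s (q (i+1)), mp (T i) s (q i), mp (T (i+2)) s (q (i+2))) : Plane × Plane × Plane)) 0 := by
        unfold mp; fun_prop
      have := ContinuousAt.comp (f := (fun s : ℝ => ((mp (T (i+1)) s (q (i+1)), mp (T i) s (q i), mp (T (i+2)) s (q (i+2))) : Plane × Plane × Plane)))
        (g := fun y : Plane × Plane × Plane => ∠ y.1 y.2.1 y.2.2) (x := (0:ℝ))
        (continuousAt_angle (by simpa [mp] using h1) (by simpa [mp] using h2)) hc1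
      exact this
    have := Metric.continuousAt_iff'.1 hc ε hε
    filter_upwards [this] with s hs
    rw [Real.dist_eq, h0] at hs
    exact hs

open Filter Topology in
theorem good_ex {ε : ℝ} (hε : 0 < ε) {T : Fin 3 → Plane} (hT : IsTriangle T) (R : Finset Plane) :
    ∃ s : ℝ, 0 < s ∧ ∀ q : Fin 3 → Plane, (∀ i, q i ∈ R) → IsTriangle (fun i => mp (T i) s (q i)) ∧
      ∀ i, |triAngle (fun i => mp (T i) s (q i)) i - triAngle T i| < ε := by
  classical
  have h1 : ∀ᶠ s : ℝ in 𝓝 0, ∀ q ∈ Fintype.piFinset (fun _ : Fin 3 => R), IsTriangle (fun i => mp (T i) s (q i)) ∧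
      ∀ i, |triAngle (fun i => mp (T i) s (q i)) i - triAngle T i| < ε := by
    rw [Filter.eventually_all_finset]
    exact fun q _ => good_ev hε hT q
  have h2 : ∀ᶠ s : ℝ in 𝓝[>] 0, 0 < s := self_mem_nhdsWithin
  obtain ⟨s, hs⟩ := ((h1.filter_mono nhdsWithin_le_nhds).and h2).exists
  exact ⟨s, hs.2, fun q hq => hs.1 q (by simpa using hq)⟩

theorem combine {ε : ℝ} (hε : 0 < ε) {T : Fin 3 → Plane} (hT : IsTriangle T) (Q : Fin 3 → Finset Plane) :
    ∃ P : Finset Plane, P.card = (Q 0).card + (Q 1).card + (Q 2).card ∧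
      (Q 0).card * (Q 1).card * (Q 2).card + simCount ε T (Q 0) + simCount ε T (Q 1) + simCount ε T (Q 2)
        ≤ simCount ε T P := by
  classical
  obtain ⟨s, hs, hgood⟩ := good_ex hε hT (insert 0 (Q 0 ∪ Q 1 ∪ Q 2))
  have hQR : ∀ i x, x ∈ Q i → x ∈ insert 0 (Q 0 ∪ Q 1 ∪ Q 2) := by
    intro i x hx
    fin_cases i <;> simp_all
  have hdis : ∀ i j, i ≠ j → ∀ x ∈ Q i, ∀ y ∈ Q j, mp (T i) s x ≠ mp (T j) s y := by
    intro i j hij x hx y hy he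
    have := (hgood (fun k => if k = i then x else if k = j then y else 0) (by
      intro k
      split_ifs
      · exact hQR i x hx
      · exact hQR j y hy
      · simp)).1
    have := tri_inj this (a₁ := i) (a₂ := j) (by simpa [hij.symm] using he)
    exact hij this
  let P : Fin 3 → Finset Plane := fun i => (Q i).image (mp (T i) s)
  have hPd : ∀ i j, i ≠ j → Disjoint (P i) (P j) := by
    intro i j hij
    rw [Finset.disjoint_left]
    intro z hz hz'
    simp only [P, Finset.mem_image] at hz hz'
    obtain ⟨x, hx, rfl⟩ := hz
    obtain ⟨y, hy, he⟩ := hz'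
    exact hdis i j hij x hx y hy he.symm
  have hPc : ∀ i, (P i).card = (Q i).card := fun i => Finset.card_image_of_injective _ (mp_inj _ hs)
  let F : Finset Plane → Finset (Finset Plane) := fun P => (simSet_finite ε T P).toFinset
  have hc : ∀ P, simCount ε T P = (F P).card := fun P => by
    unfold simCount; rw [Set.ncard_eq_toFinset_card _ (simSet_finite ε T P)]
  have hF : ∀ P S, S ∈ F P ↔ S ⊆ P ∧ S.card = 3 ∧ FormsSimilar ε T S := fun P S => by
    simp [F]
  let A : Fin 3 → Finset (Finset Plane) := fun i => (F (Q i)).image (Finset.image (mp (T i) s))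
  have hAc : ∀ i, (A i).card = simCount ε T (Q i) := fun i => by
    rw [hc]; exact Finset.card_image_of_injective _ (Finset.image_injective (mp_inj _ hs))
  have hA : ∀ i S, S ∈ A i → S ⊆ P i ∧ S.card = 3 ∧ FormsSimilar ε T S := by
    intro i S hS
    simp only [A, Finset.mem_image] at hS
    obtain ⟨S', hS', rfl⟩ := hS
    obtain ⟨h1, h2, h3⟩ := (hF _ _).1 hS'
    exact ⟨Finset.image_subset_image h1, by rw [Finset.card_image_of_injective _ (mp_inj _ hs), h2], mp_forms _ hs h3⟩
  let gm : Plane × Plane × Plane → Finset Plane := fun t =>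
    {mp (T 0) s t.1, mp (T 1) s t.2.1, mp (T 2) s t.2.2}
  let G : Finset (Finset Plane) := (Q 0 ×ˢ Q 1 ×ˢ Q 2).image gm
  have hGc : G.card = (Q 0).card * (Q 1).card * (Q 2).card := by
    rw [Finset.card_image_of_injOn, Finset.card_product, Finset.card_product, mul_assoc]
    rintro ⟨x, y, z⟩ h1 ⟨x', y', z'⟩ h2 he
    simp only [Finset.coe_product, Set.mem_prod, Finset.mem_coe] at h1 h2
    obtain ⟨hx, hy, hz⟩ := h1
    obtain ⟨hx', hy', hz'⟩ := h2
    simp only [gm] at he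
    have m0 : mp (T 0) s x ∈ ({mp (T 0) s x', mp (T 1) s y', mp (T 2) s z'} : Finset Plane) := by rw [← he]; simp
    have m1 : mp (T 1) s y ∈ ({mp (T 0) s x', mp (T 1) s y', mp (T 2) s z'} : Finset Plane) := by rw [← he]; simp
    have m2 : mp (T 2) s z ∈ ({mp (T 0) s x', mp (T 1) s y', mp (T 2) s z'} : Finset Plane) := by rw [← he]; simp
    simp only [Finset.mem_insert, Finset.mem_singleton] at m0 m1 m2
    have e0 : x = x' := mp_inj _ hs (by
      rcases m0 with h | h | h
      · exact h
      · exact absurd h (hdis 0 1 (by decide) _ hx _ hy')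
      · exact absurd h (hdis 0 2 (by decide) _ hx _ hz'))
    have e1 : y = y' := mp_inj _ hs (by
      rcases m1 with h | h | h
      · exact absurd h (hdis 1 0 (by decide) _ hy _ hx')
      · exact h
      · exact absurd h (hdis 1 2 (by decide) _ hy _ hz'))
    have e2 : z = z' := mp_inj _ hs (by
      rcases m2 with h | h | h
      · exact absurd h (hdis 2 0 (by decide) _ hz _ hx')
      · exact absurd h (hdis 2 1 (by decide) _ hz _ hy')
      · exact h)
    rw [e0, e1, e2]
  have hG : ∀ S ∈ G, S ⊆ P 0 ∪ P 1 ∪ P 2 ∧ S.card = 3 ∧ FormsSimilar ε T S ∧ ∀ i, ∃ x ∈ S, x ∈ P i := by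
    intro S hS
    simp only [G, Finset.mem_image, Finset.mem_product] at hS
    obtain ⟨⟨x, y, z⟩, ⟨hx, hy, hz⟩, rfl⟩ := hS
    dsimp only at hx hy hz
    have p0 : mp (T 0) s x ∈ P 0 := Finset.mem_image_of_mem _ hx
    have p1 : mp (T 1) s y ∈ P 1 := Finset.mem_image_of_mem _ hy
    have p2 : mp (T 2) s z ∈ P 2 := Finset.mem_image_of_mem _ hz
    refine ⟨?_, ?_, ?_, ?_⟩
    · intro w hw
      simp only [gm, Finset.mem_insert, Finset.mem_singleton] at hw
      simp only [Finset.mem_union]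
      rcases hw with rfl | rfl | rfl
      · exact Or.inl (Or.inl p0)
      · exact Or.inl (Or.inr p1)
      · exact Or.inr p2
    · exact Finset.card_eq_three.2 ⟨_, _, _, hdis 0 1 (by decide) _ hx _ hy, hdis 0 2 (by decide) _ hx _ hz,
        hdis 1 2 (by decide) _ hy _ hz, rfl⟩
    · obtain ⟨g1, g2⟩ := hgood ![x, y, z] (by
        intro i; fin_cases i
        · exact hQR 0 _ hx
        · exact hQR 1 _ hy
        · exact hQR 2 _ hz)
      refine ⟨_, ?_, g1, Equiv.refl _, g2⟩
      ext w
      simp only [gm, Finset.coe_insert, Finset.coe_singleton, Set.mem_insert_iff, Set.mem_singleton_iff,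
        Set.mem_range, Fin.exists_fin_succ]
      simp [eq_comm]
    · intro i
      fin_cases i
      · exact ⟨_, by simp [gm], p0⟩
      · exact ⟨_, by simp [gm], p1⟩
      · exact ⟨_, by simp [gm], p2⟩
  have hAA : ∀ i j, i ≠ j → Disjoint (A i) (A j) := by
    intro i j hij
    rw [Finset.disjoint_left]
    intro S hS hS'
    obtain ⟨a1, a2, _⟩ := hA i S hS
    obtain ⟨b1, _, _⟩ := hA j S hS'
    obtain ⟨x, hx⟩ : S.Nonempty := Finset.card_pos.1 (by omega)
    exact Finset.disjoint_left.1 (hPd i j hij) (a1 hx) (b1 hx)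
  have hAG : ∀ i, Disjoint (A i) G := by
    intro i
    rw [Finset.disjoint_left]
    intro S hS hS'
    obtain ⟨a1, _, _⟩ := hA i S hS
    obtain ⟨x, hx, hx'⟩ := (hG S hS').2.2.2 (i+1)
    exact Finset.disjoint_left.1 (hPd i (i+1) ((by decide : ∀ i : Fin 3, i ≠ i + 1) i)) (a1 hx) hx'
  refine ⟨P 0 ∪ P 1 ∪ P 2, ?_, ?_⟩
  · rw [Finset.card_union_of_disjoint, Finset.card_union_of_disjoint (hPd 0 1 (by decide)), hPc, hPc, hPc]
    exact Finset.disjoint_union_left.2 ⟨hPd 0 2 (by decide), hPd 1 2 (by decide)⟩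
  · have hcard : (A 0 ∪ A 1 ∪ A 2 ∪ G).card = simCount ε T (Q 0) + simCount ε T (Q 1) + simCount ε T (Q 2) +
        (Q 0).card * (Q 1).card * (Q 2).card := by
      rw [Finset.card_union_of_disjoint, Finset.card_union_of_disjoint,
        Finset.card_union_of_disjoint (hAA 0 1 (by decide)), hAc, hAc, hAc, hGc]
      · exact Finset.disjoint_union_left.2 ⟨hAA 0 2 (by decide), hAA 1 2 (by decide)⟩
      · exact Finset.disjoint_union_left.2 ⟨Finset.disjoint_union_left.2 ⟨hAG 0, hAG 1⟩, hAG 2⟩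
    have hsub : A 0 ∪ A 1 ∪ A 2 ∪ G ⊆ F (P 0 ∪ P 1 ∪ P 2) := by
      intro S hS
      rw [hF]
      simp only [Finset.mem_union] at hS
      rcases hS with ((hS | hS) | hS) | hS
      · obtain ⟨a1, a2⟩ := hA _ _ hS
        exact ⟨a1.trans (fun x hx => by simp [hx]), a2⟩
      · obtain ⟨a1, a2⟩ := hA _ _ hS
        exact ⟨a1.trans (fun x hx => by simp [hx]), a2⟩
      · obtain ⟨a1, a2⟩ := hA _ _ hS
        exact ⟨a1.trans (fun x hx => by simp [hx]), a2⟩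
      · obtain ⟨a1, a2, a3, _⟩ := hG _ hS
        exact ⟨a1, a2, a3⟩
    have := Finset.card_le_card hsub
    rw [hcard] at this
    rw [hc (P 0 ∪ P 1 ∪ P 2)]
    omega

theorem lower (h : ℕ → ℕ) (hrec : HRec h) {ε : ℝ} (hε : 0 < ε) {T : Fin 3 → Plane} (hT : IsTriangle T) :
    ∀ n : ℕ, ∃ P : Finset Plane, P.card = n ∧ h n ≤ simCount ε T P := by
  intro n
  induction n using Nat.strong_induction_on with
  | _ n ih =>
  by_cases hn : n < 3
  · have : Infinite Plane := Module.Free.infinite ℝ Plane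
    obtain ⟨P, hP⟩ := Infinite.exists_subset_card_eq Plane n
    refine ⟨P, hP, ?_⟩
    have : h n = 0 := by
      obtain ⟨h0, h1, h2, _⟩ := hrec
      interval_cases n <;> assumption
    omega
  · obtain ⟨a, b, c, hs, ha, hb, hc, he⟩ := (hrec.2.2.2 n (by omega)).1
    obtain ⟨Pa, ca, ia⟩ := ih a (by omega)
    obtain ⟨Pb, cb, ib⟩ := ih b (by omega)
    obtain ⟨Pc, cc, ic⟩ := ih c (by omega)
    obtain ⟨P, h1, h2⟩ := combine hε hT ![Pa, Pb, Pc]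
    simp only [Matrix.cons_val_zero, Matrix.cons_val_one, Matrix.cons_val] at h1 h2
    refine ⟨P, by omega, ?_⟩
    rw [ca, cb, cc] at h2
    omega

theorem h_le (h : ℕ → ℕ) (hrec : HRec h) : ∀ n : ℕ, 24 * h n + n ≤ n ^ 3 := by
  intro n
  induction n using Nat.strong_induction_on with
  | _ n ih =>
  by_cases hn : n < 3
  · obtain ⟨h0, h1, h2, _⟩ := hrec
    interval_cases n <;> simp [h0, h1, h2]
  · obtain ⟨a, b, c, hs, ha, hb, hc, he⟩ := (hrec.2.2.2 n (by omega)).1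
    have ia := ih a (by omega)
    have ib := ih b (by omega)
    have ic := ih c (by omega)
    rw [he, ← hs]
    have : 6 * (a * b * c) ≤ a^2*b + a^2*c + b^2*a + b^2*c + c^2*a + c^2*b := by
      zify
      nlinarith [mul_nonneg (Int.natCast_nonneg a) (sq_nonneg ((b:ℤ)-c)), mul_nonneg (Int.natCast_nonneg b) (sq_nonneg ((a:ℤ)-c)),
        mul_nonneg (Int.natCast_nonneg c) (sq_nonneg ((a:ℤ)-b))]
    nlinarith

theorem h_pow (h : ℕ → ℕ) (hrec : HRec h) : ∀ k : ℕ, 24 * h (3 ^ k) + 3 ^ k = (3 ^ k) ^ 3 := by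
  intro k
  induction k with
  | zero => simp [hrec.2.1]
  | succ k ih =>
    refine le_antisymm (h_le h hrec _) ?_
    have hpos : 0 < 3 ^ k := by positivity
    have := (hrec.2.2.2 (3 ^ (k+1)) (by rw [pow_succ]; omega)).2
      ⟨3 ^ k, 3 ^ k, 3 ^ k, by rw [pow_succ]; omega, by rw [pow_succ]; omega, by rw [pow_succ]; omega, by rw [pow_succ]; omega, rfl⟩
    rw [show 3 ^ (k+1) = 3 ^ k * 3 from pow_succ 3 k] at this ⊢
    generalize 3 ^ k = m at *
    nlinarith

/-- For the equilateral triangle `T` there is `ε₀ ≥ π/180` such that for all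
`0 < ε < ε₀` and all `n`, `h(n, T, ε) = h(n)`; in particular
`h(n, T, ε) = (n³ - n)/24` when `n` is a power of `3`. -/
theorem stmt_4 (h : ℕ → ℕ) (hrec : HRec h)
    (T : Fin 3 → Plane) (hT : IsTriangle T)
    (heq1 : dist (T 0) (T 1) = dist (T 1) (T 2))
    (heq2 : dist (T 1) (T 2) = dist (T 2) (T 0)) :
    ∃ ε₀ : ℝ, Real.pi / 180 ≤ ε₀ ∧ ∀ ε : ℝ, 0 < ε → ε < ε₀ →
      (∀ n : ℕ, hGeo n T ε = h n) ∧
      (∀ n : ℕ, (∃ k : ℕ, n = 3 ^ k) → 24 * hGeo n T ε = n ^ 3 - n) := by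
  refine ⟨Real.pi / 180, le_rfl, fun ε hε hε' => ?_⟩
  have main : ∀ n : ℕ, hGeo n T ε = h n := by
    intro n
    have hub : ∀ m ∈ {m | ∃ P : Finset Plane, P.card = n ∧ simCount ε T P = m}, m ≤ h n := by
      rintro m ⟨P, rfl, rfl⟩
      exact simCount_le h hrec ε hε' T (equi_angle T hT heq1 heq2) P
    obtain ⟨P, h1, h2⟩ := lower h hrec hε hT n
    unfold hGeo
    refine le_antisymm (csSup_le ⟨_, P, h1, rfl⟩ hub) (h2.trans (le_csSup ⟨_, hub⟩ ⟨P, h1, rfl⟩))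
  refine ⟨main, ?_⟩
  rintro n ⟨k, rfl⟩
  rw [main]
  have := h_pow h hrec k
  omega

end
end
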